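/- The contraction operator δ_o on decorated graphs of odd type is well defined on the quotient space D_o (i.e., it is compatible with the sign relations on decorations), it satisfies δ_o ∘ δ_o = 0, and it maps D_o^{k,m} into D_o^{k,m+1} for every order k and every degree m. -/

import Mathlib

open scoped Classical

/-!
# The odd graph complex `(D_o, δ_o)` and its coboundary operator

We encode a *decorated graph of odd type* as follows.  Its vertices are the natural
numbers `0, …, ve + vi - 1`: the labels `0, …, ve - 1` are the external vertices, placed
on the distinguished oriented circle in the (cyclically increasing) order of their labels,
and the labels `ve, …, ve + vi - 1` are the internal vertices.  (This realizes the
requirement that the labelling of the external vertices be cyclic w.r.t. the orientation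
of the circle; labels here are 0-indexed, the paper's labels being 1-indexed.)
Each edge is oriented (recorded by the ordered pair `(src, tgt)`), and each external small
loop carries, in addition, an ordering of its two half-edges; only the comparison of this
ordering with the edge orientation matters up to the sign rules, and this comparison is
recorded in the Boolean field `lp` (for non-loop edges `lp` is required to be `false`).
-/

/-- A decorated oriented edge: source and target vertex labels, together with the
half-edge-ordering bit for small loops. -/
structure OEdge where
  src : ℕ
  tgt : ℕ
  lp : Bool
deriving DecidableEq

/-- A decorated graph of odd type: `ve` external vertices (labels `0,…,ve-1`, lying on the
oriented circle in this cyclic order), `vi` internal vertices (labels `ve,…,ve+vi-1`), and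
a multiset of decorated oriented edges. -/
structure OddGraph where
  ve : ℕ
  vi : ℕ
  edges : Multiset OEdge
deriving DecidableEq

namespace OddGraph

/-- Total number of vertices. -/
def nv (g : OddGraph) : ℕ := g.ve + g.vi

/-- The valence of a vertex: the number of edge-ends at it. -/
def valence (g : OddGraph) (v : ℕ) : ℕ :=
  (g.edges.map fun e => (if e.src = v then 1 else 0) + (if e.tgt = v then 1 else 0)).sum

/-- Two vertices are adjacent if joined by an edge or if both lie on the circle. -/
def adj (g : OddGraph) (a b : ℕ) : Prop :=
  (∃ e ∈ g.edges, (e.src = a ∧ e.tgt = b) ∨ (e.src = b ∧ e.tgt = a)) ∨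
    (a < g.ve ∧ b < g.ve)

/-- Connectivity of the graph (including the distinguished circle). -/
def Connected (g : OddGraph) : Prop :=
  ∀ a b, a < g.nv → b < g.nv → Relation.ReflTransGen g.adj a b

/-- A valid decorated graph of odd type: edges join actual vertices, non-loop edges carry
no half-edge-ordering bit, internal vertices are at least trivalent, external vertices
carry at least one edge-end, and the graph is connected. -/
def IsValid (g : OddGraph) : Prop :=
  (∀ e ∈ g.edges, e.src < g.nv ∧ e.tgt < g.nv) ∧
  (∀ e ∈ g.edges, e.src ≠ e.tgt → e.lp = false) ∧
  (∀ v, g.ve ≤ v → v < g.nv → 3 ≤ g.valence v) ∧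
  (∀ v, v < g.ve → 1 ≤ g.valence v) ∧
  g.Connected

/-- Number of edges. -/
def numEdges (g : OddGraph) : ℕ := Multiset.card g.edges

/-- The *order* of a graph: `e - v_i`. -/
def ordZ (g : OddGraph) : ℤ := (g.numEdges : ℤ) - (g.vi : ℤ)

/-- The *degree* of a graph: `2e - 3v_i - v_e`. -/
def degZ (g : OddGraph) : ℤ := 2 * (g.numEdges : ℤ) - 3 * (g.vi : ℤ) - (g.ve : ℤ)

/-- A *regular edge*: neither a small loop nor a chord. -/
def isRegular (g : OddGraph) (e : OEdge) : Prop :=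
  e.src ≠ e.tgt ∧ ¬(e.src < g.ve ∧ e.tgt < g.ve)

/-- Two vertices joined by more than one edge. -/
def hasDoubleEdge (g : OddGraph) : Prop :=
  ∃ e ∈ g.edges, ∃ f ∈ g.edges.erase e,
    (f.src = e.src ∧ f.tgt = e.tgt) ∨ (f.src = e.tgt ∧ f.tgt = e.src)

/-- An internal small loop. -/
def hasInternalLoop (g : OddGraph) : Prop :=
  ∃ e ∈ g.edges, e.src = e.tgt ∧ g.ve ≤ e.src

end OddGraph

/-- Vertex relabelling after merging the vertices `i` and `j`: the merged vertex receives
the label `min i j`, and all labels greater than `max i j` are lowered by one. -/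
def mergeMap (i j x : ℕ) : ℕ :=
  if x = i ∨ x = j then min i j else if max i j < x then x - 1 else x

namespace OddGraph

/-- Contraction of a regular edge `e`: the edge is removed and its end-points are merged. -/
def contractEdge (g : OddGraph) (e : OEdge) : OddGraph where
  ve := g.ve
  vi := g.vi - 1
  edges := (g.edges.erase e).map fun f =>
    ⟨mergeMap e.src e.tgt f.src, mergeMap e.src e.tgt f.tgt, f.lp⟩

/-- Contraction of the arc running (along the circle orientation) from the external vertex
`i` to the consecutive external vertex `j`.  A short chord joining `i` and `j` becomes an
external small loop whose half-edges are ordered consistently with the orientation of the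
circle (the bit `lp` then records the comparison of the inherited edge orientation with
this ordering). -/
def contractArc (g : OddGraph) (i j : ℕ) : OddGraph where
  ve := g.ve - 1
  vi := g.vi
  edges := g.edges.map fun f =>
    if f.src = i ∧ f.tgt = j then ⟨min i j, min i j, false⟩
    else if f.src = j ∧ f.tgt = i then ⟨min i j, min i j, true⟩
    else ⟨mergeMap i j f.src, mergeMap i j f.tgt, f.lp⟩

/-- The arcs of the circle, as ordered pairs of consecutive external vertices (oriented
along the circle). -/
def arcs (g : OddGraph) : List (ℕ × ℕ) :=
  if 2 ≤ g.ve then ((List.range (g.ve - 1)).map fun i => (i, i + 1)) ++ [(g.ve - 1, 0)]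
  else []

end OddGraph

/-- The contraction sign `σ(i,j)` (0-indexed version of the paper's
`σ(i,j) = (-1)^j` for `j > i` and `(-1)^{i+1}` for `j < i`, which is stated for 1-indexed
labels). -/
def csign (i j : ℕ) : ℝ := if i < j then (-1) ^ (j + 1) else (-1) ^ i

/-- The value of the coboundary operator `δ_o` on a single decorated graph: the signed sum
of the contractions of all regular edges and all arcs.  (On graphs that are `0` in `D_o`
by the relations, the operator is extended by `0`.) -/
noncomputable def deltaGen (g : OddGraph) : OddGraph →₀ ℝ :=
  if g.IsValid ∧ ¬g.hasDoubleEdge ∧ ¬g.hasInternalLoop then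
    ((g.edges.filter fun e => g.isRegular e).map fun e =>
        csign e.src e.tgt • Finsupp.single (g.contractEdge e) (1 : ℝ)).sum
      + (g.arcs.map fun p =>
          csign p.1 p.2 • Finsupp.single (g.contractArc p.1 p.2) (1 : ℝ)).sum
  else 0

/-- The coboundary operator `δ_o` on the free vector space generated by decorated graphs
of odd type. -/
noncomputable def deltaFree : (OddGraph →₀ ℝ) →ₗ[ℝ] (OddGraph →₀ ℝ) :=
  Finsupp.lsum ℝ fun g => LinearMap.toSpanSingleton ℝ (OddGraph →₀ ℝ) (deltaGen g)

/-- Relabelling of vertices by a permutation `π` of the internal labels and a cyclic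
rotation by `r` of the external labels. -/
def permVertex (ve vi : ℕ) (π : Equiv.Perm (Fin vi)) (r : ℕ) (v : ℕ) : ℕ :=
  if v < ve then (v + r) % ve
  else if h : v - ve < vi then ve + (π ⟨v - ve, h⟩ : Fin vi) else v

/-- The action of a vertex relabelling on a decorated edge. -/
def permOEdge (ve vi : ℕ) (π : Equiv.Perm (Fin vi)) (r : ℕ) (e : OEdge) : OEdge :=
  ⟨permVertex ve vi π r e.src, permVertex ve vi π r e.tgt, e.lp⟩

/-- Reversal of the orientation of an edge (for small loops: reversal of the half-edge
ordering relative to the orientation). -/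
def flipOEdge (e : OEdge) : OEdge :=
  if e.src = e.tgt then ⟨e.src, e.tgt, !e.lp⟩ else ⟨e.tgt, e.src, e.lp⟩

/-- `OddRel g g' ε` holds when `g'` is obtained from `g` by a permutation of the internal
labels, a cyclic permutation of the external labels, and reversals of edge orientations
and of half-edge orderings of external small loops; `ε = (-1)^{π₁+π₂+l+s}` is the
corresponding sign. -/
def OddRel (g g' : OddGraph) (ε : ℝ) : Prop :=
  g'.ve = g.ve ∧ g'.vi = g.vi ∧
  ∃ (π : Equiv.Perm (Fin g.vi)) (r : ℕ) (F : Multiset (OEdge × Bool)),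
    F.map Prod.fst = g.edges.map (permOEdge g.ve g.vi π r) ∧
    g'.edges = F.map (fun p => if p.2 then flipOEdge p.1 else p.1) ∧
    ε = ((Equiv.Perm.sign π : ℤ) : ℝ)
        * ((Equiv.Perm.sign (finRotate g.ve ^ r) : ℤ) : ℝ)
        * (-1) ^ Multiset.card (F.filter fun p => p.2 = true)

/-- The defining relations of `D_o`: non-graphs are `0`, graphs with a double edge are
`0`, graphs with an internal small loop are `0`, and graphs differing only in the
decoration are identified up to the sign `(-1)^{π₁+π₂+l+s}`. -/
def oddRelSet : Set (OddGraph →₀ ℝ) :=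
  {x | ∃ g : OddGraph, ¬g.IsValid ∧ x = Finsupp.single g 1} ∪
  {x | ∃ g : OddGraph, g.hasDoubleEdge ∧ x = Finsupp.single g 1} ∪
  {x | ∃ g : OddGraph, g.hasInternalLoop ∧ x = Finsupp.single g 1} ∪
  {x | ∃ g g' ε, OddRel g g' ε ∧ x = Finsupp.single g 1 - ε • Finsupp.single g' 1}

/-- The submodule of relations. -/
noncomputable def oddRelations : Submodule ℝ (OddGraph →₀ ℝ) := Submodule.span ℝ oddRelSet

/-- The odd graph complex `D_o`, the quotient of the free vector space on decorated graphs
of odd type by the relations. -/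
abbrev Do := (OddGraph →₀ ℝ) ⧸ oddRelations

/-- The subspace `D_o^{k,m}` of `D_o` spanned by the graphs of order `k` and degree `m`. -/
noncomputable def oddPiece (k m : ℤ) : Submodule ℝ Do :=
  Submodule.span ℝ {x | ∃ g : OddGraph,
    g.IsValid ∧ g.ordZ = k ∧ g.degZ = m ∧
    x = Submodule.Quotient.mk (p := oddRelations) (Finsupp.single g 1)}

namespace OddGraph

theorem mergeMap_comm (i j x : ℕ) : mergeMap i j x = mergeMap j i x := by
  simp only [mergeMap, min_comm i j, max_comm i j, or_comm (a := x = i)]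

theorem mergeMap_of_lt {i j : ℕ} (h : i < j) (x : ℕ) :
    mergeMap i j x = if x = j then i else if j < x then x - 1 else x := by
  unfold mergeMap; rw [min_eq_left h.le, max_eq_right h.le]; grind

theorem mergeMap_eq_iff {i j : ℕ} (h : i ≠ j) (x y : ℕ) :
    mergeMap i j x = mergeMap i j y ↔ x = y ∨ ((x = i ∨ x = j) ∧ (y = i ∨ y = j)) := by
  rcases lt_or_gt_of_ne h with h | h
  · rw [mergeMap_of_lt h, mergeMap_of_lt h]; grind
  · rw [mergeMap_comm, mergeMap_comm i, mergeMap_of_lt h, mergeMap_of_lt h]; grind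

theorem mergeMap_lt {i j x n : ℕ} (h : i ≠ j) (hi : i < n) (hj : j < n) (hx : x < n) :
    mergeMap i j x < n - 1 := by
  unfold mergeMap; grind

theorem csign_of_lt {i j : ℕ} (h : i < j) : csign i j = (-1) ^ (j + 1) := if_pos h

theorem csign_of_gt {i j : ℕ} (h : j < i) : csign i j = (-1) ^ i := if_neg h.not_gt

theorem csign_swap {i j : ℕ} (h : i ≠ j) : csign j i = -csign i j := by
  rcases lt_or_gt_of_ne h with h | h
  · simp [csign_of_lt h, csign_of_gt h, pow_succ]
  · simp [csign_of_lt h, csign_of_gt h, pow_succ]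

/-- The contractions of two pairs of vertices commute, and their signs anticommute. -/
def MergeCommute (i j k l : ℕ) : Prop :=
  (∀ x, mergeMap (mergeMap i j k) (mergeMap i j l) (mergeMap i j x) =
      mergeMap (mergeMap k l i) (mergeMap k l j) (mergeMap k l x)) ∧
    csign i j * csign (mergeMap i j k) (mergeMap i j l) =
      -(csign k l * csign (mergeMap k l i) (mergeMap k l j))

theorem MergeCommute.symm {i j k l : ℕ} (h : MergeCommute i j k l) : MergeCommute k l i j :=
  ⟨fun x => (h.1 x).symm, by rw [h.2, neg_neg]⟩

theorem MergeCommute.swap {i j k l : ℕ} (h : MergeCommute i j k l) (hij : i ≠ j)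
    (hkl : k ≠ l) (hne : ¬(i = k ∧ j = l)) (hne' : ¬(i = l ∧ j = k)) :
    MergeCommute j i k l := by
  have h1 : mergeMap k l i ≠ mergeMap k l j := by rw [Ne, mergeMap_eq_iff hkl]; grind
  refine ⟨fun x => ?_, ?_⟩
  · simpa only [mergeMap_comm j i, mergeMap_comm (mergeMap k l j)] using h.1 x
  · simp only [mergeMap_comm j i, csign_swap hij, csign_swap h1, neg_mul, h.2, mul_neg]

private theorem mergeCommute_of_lt {i j k l : ℕ} (h : i < j) (h' : k < l) (hjl : j < l) :
    MergeCommute i j k l := by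
  have h1 : mergeMap k l i = i := by rw [mergeMap_of_lt h']; grind
  have h2 : mergeMap k l j = j := by rw [mergeMap_of_lt h']; grind
  have h3 : mergeMap i j l = l - 1 := by rw [mergeMap_of_lt h]; grind
  have h4 : mergeMap i j k < l - 1 := by rw [mergeMap_of_lt h]; grind
  refine ⟨fun x => ?_, ?_⟩
  · rw [h1, h2, h3, mergeMap_of_lt h4, mergeMap_of_lt h, mergeMap_of_lt h', mergeMap_of_lt h,
      mergeMap_of_lt h]
    split_ifs <;> omega
  · obtain ⟨m, rfl⟩ : ∃ m, l = m + 1 := ⟨l - 1, by omega⟩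
    rw [h1, h2, h3, csign_of_lt h4, csign_of_lt h, csign_of_lt h']
    simp [pow_succ]; ring

private theorem mergeCommute_of_eq {i j k : ℕ} (h : i < k) (h' : k < j) :
    MergeCommute i j k j := by
  have h1 : mergeMap k j i = i := by rw [mergeMap_of_lt h']; grind
  have h2 : mergeMap k j j = k := by rw [mergeMap_of_lt h']; grind
  have h3 : mergeMap i j j = i := by rw [mergeMap_of_lt (h.trans h')]; grind
  have h4 : mergeMap i j k = k := by rw [mergeMap_of_lt (h.trans h')]; grind
  refine ⟨fun x => ?_, ?_⟩
  · rw [h1, h2, h3, h4, mergeMap_comm k i, mergeMap_of_lt (h.trans h'), mergeMap_of_lt h,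
      mergeMap_of_lt h', mergeMap_of_lt h]
    split_ifs <;> omega
  · rw [h1, h2, h3, h4, csign_of_gt h, csign_of_lt h, csign_of_lt h', csign_of_lt (h.trans h')]
    ring

theorem mergeCommute {i j k l : ℕ} (hij : i ≠ j) (hkl : k ≠ l)
    (hne : ¬(i = k ∧ j = l)) (hne' : ¬(i = l ∧ j = k)) : MergeCommute i j k l := by
  have key : ∀ {i j k l : ℕ}, i < j → k < l → ¬(i = k ∧ j = l) → MergeCommute i j k l := by
    intro i j k l h h' hne
    rcases lt_trichotomy j l with hjl | rfl | hjl
    · exact mergeCommute_of_lt h h' hjl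
    · rcases lt_trichotomy i k with hik | rfl | hik
      · exact mergeCommute_of_eq hik h'
      · exact absurd ⟨rfl, rfl⟩ hne
      · exact (mergeCommute_of_eq hik h).symm
    · exact (mergeCommute_of_lt h' h hjl).symm
  have key' : ∀ {i j k l : ℕ}, i < j → k ≠ l → ¬(i = k ∧ j = l) → ¬(i = l ∧ j = k) →
      MergeCommute i j k l := by
    intro i j k l h h' hne hne'
    rcases lt_or_gt_of_ne h' with h' | h'
    · exact key h h' hne
    · exact ((key h h' hne').symm.swap h'.ne h.ne (by tauto) (by tauto)).symm
  rcases lt_or_gt_of_ne hij with h | h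
  · exact key' h hkl hne hne'
  · exact (key' h hkl (by tauto) (by tauto)).swap h.ne hkl (by tauto) (by tauto)

end OddGraph

namespace OEdge

/-- The action of a map of vertex labels on a decorated edge. -/
def relabel (φ : ℕ → ℕ) (e : OEdge) : OEdge := ⟨φ e.src, φ e.tgt, e.lp⟩

/-- Two edges have the same pair of endpoints. -/
def Parallel (e f : OEdge) : Prop :=
  (f.src = e.src ∧ f.tgt = e.tgt) ∨ (f.src = e.tgt ∧ f.tgt = e.src)

/-- The effect on an edge of contracting the oriented pair of vertices `(i, j)`. -/
def contract (i j : ℕ) (f : OEdge) : OEdge :=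
  if f.src = i ∧ f.tgt = j then ⟨min i j, min i j, false⟩
  else if f.src = j ∧ f.tgt = i then ⟨min i j, min i j, true⟩
  else ⟨mergeMap i j f.src, mergeMap i j f.tgt, f.lp⟩

theorem Parallel.symm {e f : OEdge} (h : e.Parallel f) : f.Parallel e := by
  unfold Parallel at *; tauto

theorem src_contract (i j : ℕ) (f : OEdge) : (f.contract i j).src = mergeMap i j f.src := by
  unfold contract mergeMap; grind

theorem tgt_contract (i j : ℕ) (f : OEdge) : (f.contract i j).tgt = mergeMap i j f.tgt := by
  unfold contract mergeMap; grind

theorem lp_contract (i j : ℕ) (f : OEdge) : (f.contract i j).lp =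
    if f.src = i ∧ f.tgt = j then false else if f.src = j ∧ f.tgt = i then true else f.lp := by
  unfold contract; grind

@[ext] theorem ext' {e f : OEdge} (h : e.src = f.src) (h' : e.tgt = f.tgt) (h'' : e.lp = f.lp) :
    e = f := by
  cases e; cases f; simp_all

theorem contract_contract {i j k l : ℕ} (hij : i ≠ j) (hkl : k ≠ l)
    (hne : ¬(i = k ∧ j = l)) (hne' : ¬(i = l ∧ j = k)) {f : OEdge}
    (hf : ¬(f.contract i j).Parallel (contract i j ⟨k, l, false⟩) ∨ j = k ∨ l = i ∨
      (i ≠ k ∧ i ≠ l ∧ j ≠ k ∧ j ≠ l)) :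
    (f.contract i j).contract (mergeMap i j k) (mergeMap i j l) =
      (f.contract k l).contract (mergeMap k l i) (mergeMap k l j) := by
  ext
  · simp only [src_contract, (OddGraph.mergeCommute hij hkl hne hne').1]
  · simp only [tgt_contract, (OddGraph.mergeCommute hij hkl hne hne').1]
  · simp only [Parallel, src_contract, tgt_contract, OddGraph.mergeMap_eq_iff hij] at hf
    simp only [lp_contract, src_contract, tgt_contract, OddGraph.mergeMap_eq_iff hij,
      OddGraph.mergeMap_eq_iff hkl]
    grind

theorem parallel_contract_iff {i j : ℕ} (hij : i ≠ j) (e f : OEdge) :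
    (e.contract i j).Parallel (f.contract i j) ↔
      ((f.src = e.src ∨ ((f.src = i ∨ f.src = j) ∧ (e.src = i ∨ e.src = j))) ∧
        (f.tgt = e.tgt ∨ ((f.tgt = i ∨ f.tgt = j) ∧ (e.tgt = i ∨ e.tgt = j)))) ∨
      ((f.src = e.tgt ∨ ((f.src = i ∨ f.src = j) ∧ (e.tgt = i ∨ e.tgt = j))) ∧
        (f.tgt = e.src ∨ ((f.tgt = i ∨ f.tgt = j) ∧ (e.src = i ∨ e.src = j)))) := by
  simp only [Parallel, src_contract, tgt_contract, OddGraph.mergeMap_eq_iff hij]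

theorem Parallel.contract {e f : OEdge} (h : e.Parallel f) {i j : ℕ} :
    (e.contract i j).Parallel (f.contract i j) := by
  unfold Parallel at *
  simp only [src_contract, tgt_contract]
  rcases h with ⟨h, h'⟩ | ⟨h, h'⟩ <;> simp [h, h']

/-- Three pairwise non-parallel edges form a triangle in a symmetric way. -/
theorem parallel_contract_rotate {e f h : OEdge} (he : e.src ≠ e.tgt) (hf : f.src ≠ f.tgt)
    (hef : ¬e.Parallel f) (hfh : ¬f.Parallel h)
    (hp : (f.contract e.src e.tgt).Parallel (h.contract e.src e.tgt)) :
    (e.contract f.src f.tgt).Parallel (h.contract f.src f.tgt) := by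
  rw [parallel_contract_iff he] at hp
  rw [parallel_contract_iff hf]
  unfold Parallel at *
  grind

theorem contract_flip {i j : ℕ} (hij : i ≠ j) (f : OEdge) :
    (flipOEdge f).contract i j = flipOEdge (f.contract i j) := by
  unfold flipOEdge
  simp only [src_contract, tgt_contract, OddGraph.mergeMap_eq_iff hij]
  split_ifs <;> ext <;> simp only [src_contract, tgt_contract, lp_contract] <;> grind [mergeMap]

theorem contract_relabel {φ ψ : ℕ → ℕ} (hφ : φ.Injective) {i j : ℕ}
    (h : ∀ x, mergeMap (φ i) (φ j) (φ x) = ψ (mergeMap i j x)) (f : OEdge) :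
    (f.relabel φ).contract (φ i) (φ j) = (f.contract i j).relabel ψ := by
  ext
  · simp [relabel, src_contract, h]
  · simp [relabel, tgt_contract, h]
  · simp [relabel, lp_contract, hφ.eq_iff]

end OEdge

/-- The multiset contains two parallel edges. -/
def HasParallel (s : Multiset OEdge) : Prop := ∃ e ∈ s, ∃ f ∈ s.erase e, e.Parallel f

theorem hasParallel_map (ψ : OEdge → OEdge) (s : Multiset OEdge) :
    HasParallel (s.map ψ) ↔ ∃ e ∈ s, ∃ f ∈ s.erase e, (ψ e).Parallel (ψ f) := by
  constructor
  · rintro ⟨_, he, f, hf, h⟩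
    obtain ⟨e, he', rfl⟩ := Multiset.mem_map.1 he
    rw [← Multiset.map_erase_of_mem ψ s he'] at hf
    obtain ⟨f, hf', rfl⟩ := Multiset.mem_map.1 hf
    exact ⟨e, he', f, hf', h⟩
  · rintro ⟨e, he, f, hf, h⟩
    refine ⟨ψ e, Multiset.mem_map_of_mem ψ he, ψ f, ?_, h⟩
    rw [← Multiset.map_erase_of_mem ψ s he]
    exact Multiset.mem_map_of_mem ψ hf

theorem nodup_of_not_hasParallel {s : Multiset OEdge} (h : ¬HasParallel s) : s.Nodup := by
  rw [Multiset.nodup_iff_ne_cons_cons]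
  rintro e t rfl
  exact h ⟨e, by simp, e, by simp, .inl ⟨rfl, rfl⟩⟩

theorem not_parallel_of_mem_erase {s : Multiset OEdge} (h : ¬HasParallel s) {e f : OEdge}
    (he : e ∈ s) (hf : f ∈ s.erase e) : ¬e.Parallel f := fun hp => h ⟨e, he, f, hf, hp⟩

theorem HasParallel.contract {s : Multiset OEdge} (h : HasParallel s) (i j : ℕ) :
    HasParallel (s.map (OEdge.contract i j)) := by
  obtain ⟨e, he, f, hf, hp⟩ := h
  exact (hasParallel_map _ _).2 ⟨e, he, f, hf, hp.contract⟩

/-- The class of a decorated graph in the odd graph complex. -/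
noncomputable def OddGraph.cls (g : OddGraph) : Do :=
  Submodule.Quotient.mk (p := oddRelations) (Finsupp.single g 1)

/-- The class of the coboundary of a decorated graph. -/
noncomputable def OddGraph.delta (g : OddGraph) : Do :=
  Submodule.Quotient.mk (p := oddRelations) (deltaGen g)

namespace OddGraph

/-- A valid graph which is not killed by the relations on double edges and loops. -/
def IsSimple (g : OddGraph) : Prop := g.IsValid ∧ ¬g.hasDoubleEdge ∧ ¬g.hasInternalLoop

theorem cls_eq_zero_of_mem {g : OddGraph} (h : Finsupp.single g (1 : ℝ) ∈ oddRelSet) :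
    g.cls = 0 :=
  (Submodule.Quotient.mk_eq_zero _).2 (Submodule.subset_span h)

theorem cls_eq_zero_of_not_isSimple {g : OddGraph} (h : ¬g.IsSimple) : g.cls = 0 := by
  refine cls_eq_zero_of_mem ?_
  by_cases h1 : g.IsValid
  · by_cases h2 : g.hasDoubleEdge
    · exact .inl (.inl (.inr ⟨g, h2, rfl⟩))
    · exact .inl (.inr ⟨g, by_contra fun h3 => h ⟨h1, h2, h3⟩, rfl⟩)
  · exact .inl (.inl (.inl ⟨g, h1, rfl⟩))

theorem cls_eq_zero_of_hasParallel {g : OddGraph} (h : HasParallel g.edges) : g.cls = 0 :=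
  cls_eq_zero_of_not_isSimple fun h' => h'.2.1 h

theorem cls_eq_smul {g g' : OddGraph} {ε : ℝ} (h : OddRel g g' ε) : g.cls = ε • g'.cls := by
  refine (Submodule.Quotient.eq _).2 (Submodule.subset_span (.inr ⟨g, g', ε, h, rfl⟩))

theorem delta_eq_zero {g : OddGraph} (h : ¬g.IsSimple) : g.delta = 0 := by
  unfold IsSimple at h
  unfold delta deltaGen
  rw [if_neg h]; rfl

theorem cls_perm (ve vi : ℕ) (s : Multiset OEdge) (π : Equiv.Perm (Fin vi)) (r : ℕ) :
    cls ⟨ve, vi, s⟩ = (((Equiv.Perm.sign π : ℤ) : ℝ) *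
      ((Equiv.Perm.sign (finRotate ve ^ r) : ℤ) : ℝ)) •
        cls ⟨ve, vi, s.map (permOEdge ve vi π r)⟩ := by
  refine cls_eq_smul ⟨rfl, rfl, π, r, s.map fun e => (permOEdge ve vi π r e, false), ?_, ?_, ?_⟩
  · simp
  · simp
  · simp [Multiset.filter_map]

theorem permOEdge_one_zero (ve vi : ℕ) : permOEdge ve vi 1 0 = id := by
  have : ∀ v, permVertex ve vi 1 0 v = v := by
    intro v
    unfold permVertex
    split_ifs with h1 h2
    · simp [Nat.mod_eq_of_lt h1]
    · simp; omega
    · rfl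
  funext e
  simp [permOEdge, this]

theorem cls_flip (ve vi : ℕ) (a : OEdge) (s : Multiset OEdge) :
    cls ⟨ve, vi, flipOEdge a ::ₘ s⟩ = -cls ⟨ve, vi, a ::ₘ s⟩ := by
  rw [neg_eq_iff_eq_neg.symm, eq_comm, ← neg_one_smul ℝ (cls _)]
  refine cls_eq_smul ⟨rfl, rfl, 1, 0, (a, true) ::ₘ s.map fun e => (e, false), ?_, ?_, ?_⟩
  · simp [permOEdge_one_zero]
  · simp
  · simp [Multiset.filter_map]

end OddGraph

/-- The cyclic rotation by one of the external labels `0, …, n - 1`. -/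
def rotLabel (n : ℕ) : Equiv.Perm ℕ where
  toFun v := if v + 1 < n then v + 1 else if v + 1 = n then 0 else v
  invFun v := if v = 0 then n - 1 else if v < n then v - 1 else v
  left_inv v := by grind
  right_inv v := by grind

theorem rotLabel_apply (n v : ℕ) :
    rotLabel n v = if v + 1 < n then v + 1 else if v + 1 = n then 0 else v := rfl

theorem permOEdge_rotate (ve vi : ℕ) : permOEdge ve vi 1 1 = OEdge.relabel (rotLabel ve) := by
  have : ∀ v, permVertex ve vi 1 1 v = rotLabel ve v := by
    intro v
    rw [rotLabel_apply]
    unfold permVertex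
    split_ifs with h1 h2 h3 h4 h5 h6 <;> try omega
    · exact Nat.mod_eq_of_lt h2
    · rw [h3, Nat.mod_self]
    · simp; omega
  funext e; simp [permOEdge, OEdge.relabel, this]

theorem permOEdge_swap (ve : ℕ) {vi : ℕ} (k l : Fin vi) :
    permOEdge ve vi (Equiv.swap k l) 0 = OEdge.relabel (Equiv.swap (ve + k) (ve + l)) := by
  have : ∀ v, permVertex ve vi (Equiv.swap k l) 0 v = Equiv.swap (ve + (k : ℕ)) (ve + l) v := by
    intro v
    simp only [permVertex, Equiv.swap_apply_def, Fin.ext_iff]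
    split_ifs with h1 <;> first | omega | simp_all [Nat.mod_eq_of_lt]
  funext e; simp [permOEdge, OEdge.relabel, this]

theorem permOEdge_mul (ve vi : ℕ) (π π' : Equiv.Perm (Fin vi)) :
    permOEdge ve vi (π * π') 0 = permOEdge ve vi π 0 ∘ permOEdge ve vi π' 0 := by
  have : ∀ v, permVertex ve vi (π * π') 0 v = permVertex ve vi π 0 (permVertex ve vi π' 0 v) := by
    intro v
    unfold permVertex
    by_cases h1 : v < ve
    · simp [h1, Nat.mod_eq_of_lt h1]
    · by_cases h2 : v - ve < vi <;> simp [h1, h2]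
  funext e; simp [permOEdge, this]

theorem permOEdge_add_one (ve vi : ℕ) (π : Equiv.Perm (Fin vi)) (r : ℕ) :
    permOEdge ve vi π (r + 1) = permOEdge ve vi π r ∘ permOEdge ve vi 1 1 := by
  have : ∀ v, permVertex ve vi π (r + 1) v = permVertex ve vi π r (permVertex ve vi 1 1 v) := by
    intro v
    unfold permVertex
    by_cases h1 : v < ve
    · have : (v + 1) % ve < ve := Nat.mod_lt _ (by omega)
      simp only [h1, this, if_true, Nat.mod_add_mod]
      congr 1; omega
    · by_cases h2 : v - ve < vi
      · simp [h1, h2]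
      · simp [h1, h2]
  funext e; simp [permOEdge, this]

namespace OddGraph

theorem cls_swap (ve : ℕ) {vi k : ℕ} (hk : ve ≤ k) (hk' : k + 1 < ve + vi)
    (s : Multiset OEdge) :
    cls ⟨ve, vi, s⟩ =
      (-1 : ℝ) • cls ⟨ve, vi, s.map (OEdge.relabel (Equiv.swap k (k + 1)))⟩ := by
  have h := cls_perm ve vi s (Equiv.swap ⟨k - ve, by omega⟩ ⟨k + 1 - ve, by omega⟩) 0
  rw [permOEdge_swap, Equiv.Perm.sign_swap (by simp [Fin.ext_iff]; omega)] at h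
  simpa [show ve + (k - ve) = k by omega, show ve + (k + 1 - ve) = k + 1 by omega] using h

theorem cls_rotate (ve vi : ℕ) (s : Multiset OEdge) :
    cls ⟨ve, vi, s⟩ =
      ((-1 : ℝ) ^ (ve - 1)) • cls ⟨ve, vi, s.map (OEdge.relabel (rotLabel ve))⟩ := by
  have h := cls_perm ve vi s 1 1
  rw [permOEdge_rotate] at h
  rcases ve with _ | n
  · simpa using h
  · simpa [sign_finRotate] using h

/-- The external vertices at which an arc starts. -/
def arcIdx (n : ℕ) : Finset ℕ := if 2 ≤ n then Finset.range n else ∅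

theorem mem_arcIdx {n i : ℕ} : i ∈ arcIdx n ↔ 2 ≤ n ∧ i < n := by
  unfold arcIdx; split_ifs with h <;> simp [h]

theorem sum_arcs {M : Type*} [AddCommMonoid M] (g : OddGraph) (T : ℕ × ℕ → M) :
    (g.arcs.map T).sum = ∑ i ∈ arcIdx g.ve, T (i, rotLabel g.ve i) := by
  unfold arcs arcIdx
  split_ifs with h
  · obtain ⟨n, hn⟩ : ∃ n, g.ve = n + 1 := ⟨g.ve - 1, by omega⟩
    rw [hn, Finset.sum_range_succ, List.map_append, List.sum_append, List.map_map]
    simp only [Nat.add_sub_cancel, List.map_cons, List.map_nil, List.sum_singleton]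
    congr 1
    · rw [Finset.sum_range]
      rw [← List.sum_ofFn]
      congr 1
      apply List.ext_getElem
      · simp
      · intro i h1 h2
        simp only [List.length_map, List.length_range] at h1
        simp [rotLabel_apply]
    · simp [rotLabel_apply]
  · simp

theorem contractEdge_eq {g : OddGraph} (hg : ¬g.hasDoubleEdge) {e : OEdge} (he : e ∈ g.edges) :
    g.contractEdge e =
      ⟨g.ve, g.vi - 1, (g.edges.erase e).map (OEdge.contract e.src e.tgt)⟩ := by
  unfold contractEdge
  congr 1
  refine Multiset.map_congr rfl fun f hf => ?_
  have := not_parallel_of_mem_erase hg he hf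
  unfold OEdge.Parallel at this
  unfold OEdge.contract
  rw [if_neg (by tauto), if_neg (by tauto)]

/-- The contraction of an edge, in a form suited to iteration. -/
def collapse (g : OddGraph) (e : OEdge) : OddGraph :=
  ⟨g.ve, g.vi - 1, (g.edges.erase e).map (OEdge.contract e.src e.tgt)⟩

theorem contractArc_eq (g : OddGraph) (i j : ℕ) :
    g.contractArc i j = ⟨g.ve - 1, g.vi, g.edges.map (OEdge.contract i j)⟩ := rfl

theorem delta_eq {g : OddGraph} (hg : g.IsSimple) :
    g.delta = ((g.edges.filter g.isRegular).map fun e =>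
        csign e.src e.tgt • (g.collapse e).cls).sum +
      ∑ i ∈ arcIdx g.ve, csign i (rotLabel g.ve i) • (g.contractArc i (rotLabel g.ve i)).cls := by
  unfold delta deltaGen
  rw [if_pos (by exact hg), sum_arcs, ← Submodule.mkQ_apply, map_add, map_sum, map_multiset_sum,
    Multiset.map_map]
  congr 2
  refine Multiset.map_congr rfl fun e he => ?_
  rw [Function.comp_apply, map_smul, contractEdge_eq hg.2.1 (Multiset.mem_filter.1 he).1]
  rfl

end OddGraph

/-- The multiset of end-points of the edges. -/
def edgeEnds (s : Multiset OEdge) : Multiset ℕ := s.map OEdge.src + s.map OEdge.tgt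

theorem edgeEnds_cons (a : OEdge) (s : Multiset OEdge) :
    edgeEnds (a ::ₘ s) = a.src ::ₘ a.tgt ::ₘ edgeEnds s := by
  simp [edgeEnds, Multiset.cons_swap]

theorem edgeEnds_map {ψ : OEdge → OEdge} {m : ℕ → ℕ} (hs : ∀ e, (ψ e).src = m e.src)
    (ht : ∀ e, (ψ e).tgt = m e.tgt) (s : Multiset OEdge) :
    edgeEnds (s.map ψ) = (edgeEnds s).map m := by
  simp [edgeEnds, hs, ht]

theorem valence_eq_count (g : OddGraph) (v : ℕ) :
    g.valence v = (edgeEnds g.edges).count v := by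
  unfold OddGraph.valence
  induction g.edges using Multiset.induction with
  | empty => simp [edgeEnds]
  | cons a s ih =>
    rw [Multiset.map_cons, Multiset.sum_cons, ih, edgeEnds_cons, Multiset.count_cons,
      Multiset.count_cons]
    simp only [eq_comm (a := v)]
    ring

theorem count_le_count_map' (m : ℕ → ℕ) (s : Multiset ℕ) (x : ℕ) :
    s.count x ≤ (s.map m).count (m x) := by
  induction s using Multiset.induction with
  | empty => simp
  | cons a s ih => rw [Multiset.map_cons, Multiset.count_cons, Multiset.count_cons]; grind

theorem count_add_count_le_count_map {m : ℕ → ℕ} {x y : ℕ} (hxy : x ≠ y) (h : m x = m y)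
    (s : Multiset ℕ) : s.count x + s.count y ≤ (s.map m).count (m x) := by
  induction s using Multiset.induction with
  | empty => simp
  | cons a s ih =>
    rw [Multiset.map_cons, Multiset.count_cons, Multiset.count_cons, Multiset.count_cons]; grind

namespace OddGraph

theorem IsValid.relabel {ve vi : ℕ} {s : Multiset OEdge} (h : IsValid ⟨ve, vi, s⟩)
    (φ : Equiv.Perm ℕ) (h1 : ∀ v, φ v < ve ↔ v < ve) (h2 : ∀ v, φ v < ve + vi ↔ v < ve + vi) :
    IsValid ⟨ve, vi, s.map (OEdge.relabel φ)⟩ := by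
  obtain ⟨ha, hb, hc, hd, he⟩ := h
  have hval : ∀ v, valence ⟨ve, vi, s.map (OEdge.relabel φ)⟩ (φ v) = valence ⟨ve, vi, s⟩ v := by
    intro v
    rw [valence_eq_count, valence_eq_count, edgeEnds_map (m := φ) (fun _ => rfl) fun _ => rfl,
      Multiset.count_map_eq_count' _ _ φ.injective]
  refine ⟨?_, ?_, ?_, ?_, ?_⟩
  · intro e he
    obtain ⟨e, he', rfl⟩ := Multiset.mem_map.1 he
    exact ⟨(h2 _).2 (ha e he').1, (h2 _).2 (ha e he').2⟩
  · intro e he hne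
    obtain ⟨e, he', rfl⟩ := Multiset.mem_map.1 he
    exact hb e he' fun h => hne (congrArg φ h)
  · intro v
    obtain ⟨v, rfl⟩ := φ.surjective v
    rw [hval]
    intro hv hv'
    exact hc v (not_lt.1 fun h => hv.not_gt ((h1 v).2 h)) ((h2 v).1 hv')
  · intro v
    obtain ⟨v, rfl⟩ := φ.surjective v
    rw [hval]
    exact fun hv => hd v ((h1 v).1 hv)
  · intro a b
    obtain ⟨a, rfl⟩ := φ.surjective a
    obtain ⟨b, rfl⟩ := φ.surjective b
    intro hva hvb
    refine Relation.ReflTransGen.lift (p := adj ⟨ve, vi, s.map (OEdge.relabel φ)⟩) φ ?_ _ _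
      (he a b ((h2 a).1 hva) ((h2 b).1 hvb))
    rintro a b (⟨e, he, hab⟩ | hab)
    · refine .inl ⟨_, Multiset.mem_map_of_mem _ he, ?_⟩
      simpa [OEdge.relabel] using hab
    · exact .inr ⟨(h1 a).2 hab.1, (h1 b).2 hab.2⟩

theorem IsSimple.relabel {ve vi : ℕ} {s : Multiset OEdge} (h : IsSimple ⟨ve, vi, s⟩)
    (φ : Equiv.Perm ℕ) (h1 : ∀ v, φ v < ve ↔ v < ve) (h2 : ∀ v, φ v < ve + vi ↔ v < ve + vi) :
    IsSimple ⟨ve, vi, s.map (OEdge.relabel φ)⟩ := by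
  refine ⟨h.1.relabel φ h1 h2, fun hd => h.2.1 ?_, fun hl => h.2.2 ?_⟩
  · obtain ⟨e, he, f, hf, hp⟩ := (hasParallel_map _ s).1 hd
    exact ⟨e, he, f, hf, by simpa [OEdge.Parallel, OEdge.relabel] using hp⟩
  · obtain ⟨e, he, hp, hv⟩ := hl
    obtain ⟨e, he', rfl⟩ := Multiset.mem_map.1 he
    exact ⟨e, he', φ.injective hp, not_lt.1 fun h => hv.not_gt ((h1 _).2 h)⟩

theorem isSimple_relabel_iff {ve vi : ℕ} {s : Multiset OEdge}
    (φ : Equiv.Perm ℕ) (h1 : ∀ v, φ v < ve ↔ v < ve) (h2 : ∀ v, φ v < ve + vi ↔ v < ve + vi) :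
    IsSimple ⟨ve, vi, s.map (OEdge.relabel φ)⟩ ↔ IsSimple ⟨ve, vi, s⟩ := by
  refine ⟨fun h => ?_, fun h => h.relabel φ h1 h2⟩
  have := h.relabel φ⁻¹ (fun v => by simpa using (h1 (φ⁻¹ v)).symm)
    (fun v => by simpa using (h2 (φ⁻¹ v)).symm)
  simpa [Function.comp_def, OEdge.relabel] using this

end OddGraph

theorem flipOEdge_flipOEdge (a : OEdge) : flipOEdge (flipOEdge a) = a := by
  by_cases h : a.src = a.tgt <;> cases a <;> simp_all [flipOEdge, eq_comm]

theorem flipOEdge_ends (a : OEdge) :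
    ((flipOEdge a).src = a.src ∧ (flipOEdge a).tgt = a.tgt ∧ a.src = a.tgt) ∨
      ((flipOEdge a).src = a.tgt ∧ (flipOEdge a).tgt = a.src ∧ a.src ≠ a.tgt ∧
        (flipOEdge a).lp = a.lp) := by
  unfold flipOEdge; split_ifs with h <;> simp [h]

namespace OddGraph

theorem IsSimple.flip {ve vi : ℕ} {a : OEdge} {s : Multiset OEdge}
    (h : IsSimple ⟨ve, vi, a ::ₘ s⟩) : IsSimple ⟨ve, vi, flipOEdge a ::ₘ s⟩ := by
  obtain ⟨⟨ha, hb, hc, hd, he⟩, h2, h3⟩ := h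
  have hval : ∀ v, valence ⟨ve, vi, flipOEdge a ::ₘ s⟩ v = valence ⟨ve, vi, a ::ₘ s⟩ v := by
    intro v
    simp only [valence_eq_count, edgeEnds_cons, Multiset.count_cons]
    rcases flipOEdge_ends a with h | h <;> grind
  have hadj : ∀ x y, adj ⟨ve, vi, a ::ₘ s⟩ x y → adj ⟨ve, vi, flipOEdge a ::ₘ s⟩ x y := by
    intro x y
    simp only [adj, Multiset.mem_cons, exists_eq_or_imp]
    rcases flipOEdge_ends a with h | h <;> grind
  simp only [Multiset.mem_cons, forall_eq_or_imp] at ha hb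
  refine ⟨⟨?_, ?_, ?_, ?_, ?_⟩, ?_, ?_⟩
  · simp only [Multiset.mem_cons, forall_eq_or_imp]
    refine ⟨?_, ha.2⟩
    have := ha.1
    unfold nv at *
    rcases flipOEdge_ends a with h | h <;> grind
  · simp only [Multiset.mem_cons, forall_eq_or_imp]
    refine ⟨?_, hb.2⟩
    rcases flipOEdge_ends a with h | h <;> grind
  · intro v; rw [hval]; exact hc v
  · intro v; rw [hval]; exact hd v
  · intro x y hx hy
    exact Relation.ReflTransGen.mono hadj _ _ (he x y hx hy)
  · rintro ⟨e, he, f, hf, hp⟩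
    have key : ∀ f ∈ s, ¬a.Parallel f := fun f hf hp =>
      h2 ⟨a, by simp, f, by simpa using hf, hp⟩
    have key' : ∀ f ∈ s, ¬(flipOEdge a).Parallel f := fun f hf hp => by
      refine key f hf ?_
      unfold OEdge.Parallel at *
      rcases flipOEdge_ends a with h | h <;> grind
    rcases Multiset.mem_cons.1 he with rfl | hes
    · exact key' f (by simpa using hf) hp
    · by_cases hea : e = flipOEdge a
      · subst hea; exact key' _ hes (.inl ⟨rfl, rfl⟩)
      · rw [Multiset.erase_cons_tail _ (by simpa [eq_comm] using hea)] at hf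
        rcases Multiset.mem_cons.1 hf with rfl | hf
        · exact key' e hes (OEdge.Parallel.symm hp)
        · have : e ≠ a := by rintro rfl; exact key e hes (.inl ⟨rfl, rfl⟩)
          refine h2 ⟨e, Multiset.mem_cons_of_mem hes, f, ?_, hp⟩
          rw [Multiset.erase_cons_tail _ (by simpa [eq_comm] using this)]
          exact Multiset.mem_cons_of_mem hf
  · rintro ⟨e, he, hp, hv⟩
    rcases Multiset.mem_cons.1 he with rfl | he
    · refine h3 ⟨a, by simp, ?_⟩
      rcases flipOEdge_ends a with h | h <;> grind
    · exact h3 ⟨e, Multiset.mem_cons_of_mem he, hp, hv⟩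

theorem isSimple_flip_iff {ve vi : ℕ} {a : OEdge} {s : Multiset OEdge} :
    IsSimple ⟨ve, vi, flipOEdge a ::ₘ s⟩ ↔ IsSimple ⟨ve, vi, a ::ₘ s⟩ := by
  refine ⟨fun h => ?_, .flip⟩
  simpa only [flipOEdge_flipOEdge] using h.flip

theorem Connected.contract {g g' : OddGraph} (h : g.Connected) {m : ℕ → ℕ}
    (hm : ∀ y < g'.nv, ∃ x < g.nv, m x = y)
    (hadj : ∀ a b, g.adj a b → m a = m b ∨ g'.adj (m a) (m b)) : g'.Connected := by
  intro a b ha hb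
  obtain ⟨a, ha', rfl⟩ := hm a ha
  obtain ⟨b, hb', rfl⟩ := hm b hb
  refine Relation.ReflTransGen.lift' m (fun a b hab => ?_) _ _ (h a b ha' hb')
  rcases hadj a b hab with h | h
  · change Relation.ReflTransGen _ (m a) (m b); rw [h]
  · exact .single h

theorem IsSimple.collapse {g : OddGraph} (hg : g.IsSimple) {e : OEdge} (he : e ∈ g.edges)
    (hr : g.isRegular e) (hp : ¬(g.collapse e).hasDoubleEdge) : (g.collapse e).IsSimple := by
  obtain ⟨⟨ha, hb, hc, hd, hconn⟩, h2, h3⟩ := hg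
  obtain ⟨hne, hr⟩ := hr
  have hbd := ha e he
  have hnv : g.nv = g.ve + g.vi := rfl
  have hnv' : (g.collapse e).nv = g.ve + (g.vi - 1) := rfl
  have hends : edgeEnds (g.collapse e).edges =
      (edgeEnds (g.edges.erase e)).map (mergeMap e.src e.tgt) :=
    edgeEnds_map (OEdge.src_contract _ _) (OEdge.tgt_contract _ _) _
  have hval : ∀ v, g.valence v =
      (edgeEnds (g.edges.erase e)).count v + (if v = e.src then 1 else 0) +
        (if v = e.tgt then 1 else 0) := by
    intro v
    rw [valence_eq_count, ← Multiset.cons_erase he, edgeEnds_cons, Multiset.count_cons,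
      Multiset.count_cons, Multiset.erase_cons_head]
    ring
  have hsurj : ∀ y, y < g.ve + (g.vi - 1) → ∃ x, x < g.nv ∧ mergeMap e.src e.tgt x = y ∧
      (x < g.ve ↔ y < g.ve) ∧ x ≠ max e.src e.tgt := by
    intro y hy
    by_cases h : y < max e.src e.tgt
    · exact ⟨y, by unfold mergeMap; grind⟩
    · exact ⟨y + 1, by unfold mergeMap; grind⟩
  have hbound : ∀ y, y < g.ve + (g.vi - 1) → ∃ x, x < g.nv ∧ (x < g.ve ↔ y < g.ve) ∧
      ((x ≠ e.src ∧ x ≠ e.tgt ∧ g.valence x ≤ (g.collapse e).valence y) ∨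
        (((e.src < g.ve ∨ e.tgt < g.ve) ↔ y < g.ve) ∧
        g.valence e.src + g.valence e.tgt ≤ (g.collapse e).valence y + 2)) := by
    intro y hy
    obtain ⟨x, hx, rfl, hxe, hxm⟩ := hsurj y hy
    refine ⟨x, hx, hxe, ?_⟩
    rw [valence_eq_count (g.collapse e), hends]
    by_cases hx' : x ≠ e.src ∧ x ≠ e.tgt
    · refine .inl ⟨hx'.1, hx'.2, ?_⟩
      rw [hval, if_neg hx'.1, if_neg hx'.2]
      exact count_le_count_map' _ _ _
    · right
      have h1 : mergeMap e.src e.tgt x = mergeMap e.src e.tgt e.src := by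
        rw [mergeMap_eq_iff hne]; tauto
      have h2 := count_add_count_le_count_map hne
        ((mergeMap_eq_iff hne _ _).2 (.inr ⟨.inl rfl, .inr rfl⟩)) (edgeEnds (g.edges.erase e))
      rw [hval, hval, h1]
      refine ⟨?_, ?_⟩
      · unfold mergeMap; grind
      · simp [hne, hne.symm]; omega
  refine ⟨⟨?_, ?_, ?_, ?_, ?_⟩, hp, ?_⟩
  · intro f hf
    obtain ⟨f, hf', rfl⟩ := Multiset.mem_map.1 hf
    have hf' := ha f (Multiset.mem_of_mem_erase hf')
    rw [OEdge.src_contract, OEdge.tgt_contract]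
    have h1 := mergeMap_lt hne hbd.1 hbd.2 hf'.1
    have h2 := mergeMap_lt hne hbd.1 hbd.2 hf'.2
    omega
  · intro f hf hnf
    obtain ⟨f, hf', rfl⟩ := Multiset.mem_map.1 hf
    rw [OEdge.src_contract, OEdge.tgt_contract, Ne, mergeMap_eq_iff hne] at hnf
    rw [OEdge.lp_contract, if_neg (by grind), if_neg (by grind)]
    exact hb f (Multiset.mem_of_mem_erase hf') (by tauto)
  · intro y hy hy'
    obtain ⟨x, hx, hxe, h | h⟩ := hbound y hy'
    · exact (hc x (not_lt.1 fun h => hy.not_gt (hxe.1 h)) hx).trans h.2.2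
    · have h1 : ¬y < g.ve := hy.not_gt
      have := hc e.src (by grind) hbd.1
      have := hc e.tgt (by grind) hbd.2
      omega
  · intro y hy
    obtain ⟨x, hx, hxe, h | h⟩ := hbound y (Nat.lt_add_right _ hy)
    · exact (hd x (hxe.2 hy)).trans h.2.2
    · rcases Nat.lt_or_ge e.src g.ve with h1 | h1
      · have := hd e.src h1
        have := hc e.tgt (by grind) hbd.2
        omega
      · have := hc e.src h1 hbd.1
        have : 1 ≤ g.valence e.tgt := by
          rcases Nat.lt_or_ge e.tgt g.ve with h2 | h2
          · exact hd _ h2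
          · exact (hc _ h2 hbd.2).trans' (by norm_num)
        omega
  · refine hconn.contract (m := mergeMap e.src e.tgt) (fun y hy => ?_) ?_
    · obtain ⟨x, hx, h, -⟩ := hsurj y hy
      exact ⟨x, hx, h⟩
    · rintro a b (⟨f, hf, hab⟩ | hab)
      · by_cases hfe : f = e
        · left; subst hfe; rw [mergeMap_eq_iff hne]; grind
        · refine .inr (.inl ⟨f.contract e.src e.tgt,
            Multiset.mem_map_of_mem _ ((Multiset.mem_erase_of_ne hfe).2 hf), ?_⟩)
          rw [OEdge.src_contract, OEdge.tgt_contract]; grind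
      · refine .inr (.inr ?_)
        change _ < g.ve ∧ _ < g.ve
        unfold mergeMap; grind
  · rintro ⟨f, hf, hl, hv⟩
    obtain ⟨f, hf', rfl⟩ := Multiset.mem_map.1 hf
    have hpar := not_parallel_of_mem_erase h2 he hf'
    rw [OEdge.src_contract, OEdge.tgt_contract, mergeMap_eq_iff hne] at hl
    rw [OEdge.src_contract] at hv
    refine h3 ⟨f, Multiset.mem_of_mem_erase hf', ?_⟩
    change g.ve ≤ _ at hv
    unfold OEdge.Parallel at hpar
    unfold mergeMap at hv
    grind

theorem rotLabel_ne {n i : ℕ} (hi : i ∈ arcIdx n) : i ≠ rotLabel n i := by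
  rw [mem_arcIdx] at hi; rw [rotLabel_apply]; grind

theorem rotLabel_lt_iff {n v : ℕ} : rotLabel n v < n ↔ v < n := by
  rw [rotLabel_apply]; grind

theorem IsSimple.contractArc {g : OddGraph} (hg : g.IsSimple) {i j : ℕ} (hij : i ≠ j)
    (hi : i < g.ve) (hj : j < g.ve) (hp : ¬(g.contractArc i j).hasDoubleEdge) :
    (g.contractArc i j).IsSimple := by
  obtain ⟨⟨ha, hb, hc, hd, hconn⟩, h2, h3⟩ := hg
  have hnv : g.nv = g.ve + g.vi := rfl
  have hnv' : (g.contractArc i j).nv = g.ve - 1 + g.vi := rfl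
  have hends : edgeEnds (g.contractArc i j).edges = (edgeEnds g.edges).map (mergeMap i j) :=
    edgeEnds_map (OEdge.src_contract _ _) (OEdge.tgt_contract _ _) _
  have hsurj : ∀ y, y < g.ve - 1 + g.vi → ∃ x, x < g.nv ∧ mergeMap i j x = y ∧
      (x < g.ve ↔ y < g.ve - 1) := by
    intro y hy
    by_cases h : y < max i j
    · exact ⟨y, by unfold mergeMap; grind⟩
    · exact ⟨y + 1, by unfold mergeMap; grind⟩
  have hbound : ∀ y, y < g.ve - 1 + g.vi → ∃ x, x < g.nv ∧ (x < g.ve ↔ y < g.ve - 1) ∧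
      g.valence x ≤ (g.contractArc i j).valence y := by
    intro y hy
    obtain ⟨x, hx, rfl, hxe⟩ := hsurj y hy
    refine ⟨x, hx, hxe, ?_⟩
    rw [valence_eq_count, valence_eq_count, hends]
    exact count_le_count_map' _ _ _
  refine ⟨⟨?_, ?_, ?_, ?_, ?_⟩, hp, ?_⟩
  · intro f hf
    obtain ⟨f, hf', rfl⟩ := Multiset.mem_map.1 hf
    have hf'' := ha f hf'
    change (f.contract i j).src < _ ∧ (f.contract i j).tgt < _
    rw [OEdge.src_contract, OEdge.tgt_contract]
    have h1 := mergeMap_lt hij (by omega) (by omega) hf''.1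
    have h2 := mergeMap_lt hij (by omega) (by omega) hf''.2
    omega
  · intro f hf
    obtain ⟨f, hf', rfl⟩ := Multiset.mem_map.1 hf
    change (f.contract i j).src ≠ (f.contract i j).tgt → (f.contract i j).lp = false
    intro hnf
    rw [OEdge.src_contract, OEdge.tgt_contract, Ne, mergeMap_eq_iff hij] at hnf
    rw [OEdge.lp_contract, if_neg (by grind), if_neg (by grind)]
    exact hb f hf' (by tauto)
  · intro y hy hy'
    obtain ⟨x, hx, hxe, h⟩ := hbound y hy'
    exact (hc x (not_lt.1 fun h => hy.not_gt (hxe.1 h)) hx).trans h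
  · intro y hy
    obtain ⟨x, hx, hxe, h⟩ := hbound y (Nat.lt_add_right _ hy)
    exact (hd x (hxe.2 hy)).trans h
  · refine hconn.contract (m := mergeMap i j) (fun y hy => ?_) ?_
    · obtain ⟨x, hx, h, -⟩ := hsurj y hy
      exact ⟨x, hx, h⟩
    · rintro a b (⟨f, hf, hab⟩ | hab)
      · refine .inr (.inl ⟨f.contract i j, Multiset.mem_map_of_mem _ hf, ?_⟩)
        rw [OEdge.src_contract, OEdge.tgt_contract]; grind
      · exact .inr (.inr ⟨mergeMap_lt hij hi hj hab.1, mergeMap_lt hij hi hj hab.2⟩)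
  · rintro ⟨f, hf, hl⟩
    obtain ⟨f, hf', rfl⟩ := Multiset.mem_map.1 hf
    change (f.contract i j).src = (f.contract i j).tgt ∧ g.ve - 1 ≤ (f.contract i j).src at hl
    rw [OEdge.src_contract, OEdge.tgt_contract, mergeMap_eq_iff hij] at hl
    obtain ⟨hl, hv⟩ := hl
    refine h3 ⟨f, hf', ?_⟩
    unfold mergeMap at hv
    grind

/-- The relabelling `φ`, of sign `c`, is compatible with the contraction of `(i, j)`: it induces
a relabelling `ψ` of the contracted graphs, which have `ve` external and `vi` internal vertices,
with the correct sign. -/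
def RelabelCompatible (φ : ℕ → ℕ) (c : ℝ) (ve vi i j : ℕ) : Prop :=
  ∃ (ψ : ℕ → ℕ) (d : ℝ), (∀ x, mergeMap (φ i) (φ j) (φ x) = ψ (mergeMap i j x)) ∧
    (∀ t, cls ⟨ve, vi, t⟩ = d • cls ⟨ve, vi, t.map (OEdge.relabel ψ)⟩) ∧
    csign i j * d = c * csign (φ i) (φ j)

theorem RelabelCompatible.swap {φ : ℕ → ℕ} (hφ : φ.Injective) {c : ℝ} {ve vi i j : ℕ}
    (h : RelabelCompatible φ c ve vi i j) (hij : i ≠ j) : RelabelCompatible φ c ve vi j i := by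
  obtain ⟨ψ, d, h1, h2, h3⟩ := h
  refine ⟨ψ, d, fun x => ?_, h2, ?_⟩
  · rw [mergeMap_comm, mergeMap_comm j, h1]
  · rw [csign_swap hij, csign_swap (hφ.ne hij), neg_mul, mul_neg, h3]

theorem RelabelCompatible.smul_cls {φ : ℕ → ℕ} (hφ : φ.Injective) {c : ℝ} {ve vi i j : ℕ}
    (h : RelabelCompatible φ c ve vi i j) (t : Multiset OEdge) :
    csign i j • cls ⟨ve, vi, t.map (OEdge.contract i j)⟩ =
      c • csign (φ i) (φ j) •
        cls ⟨ve, vi, (t.map (OEdge.relabel φ)).map (OEdge.contract (φ i) (φ j))⟩ := by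
  obtain ⟨ψ, d, h1, h2, h3⟩ := h
  rw [h2, smul_smul, smul_smul, h3, Multiset.map_map, Multiset.map_map]
  congr 4
  funext e
  exact (OEdge.contract_relabel hφ h1 e).symm

theorem delta_relabel {ve vi : ℕ} (φ : Equiv.Perm ℕ) (c : ℝ)
    (h1 : ∀ v, φ v < ve ↔ v < ve) (h2 : ∀ v, φ v < ve + vi ↔ v < ve + vi)
    (hE : ∀ i j, i ≠ j → ¬(i < ve ∧ j < ve) → i < ve + vi → j < ve + vi →
      RelabelCompatible φ c ve (vi - 1) i j)
    (hA : ∀ i ∈ arcIdx ve, φ (rotLabel ve i) = rotLabel ve (φ i) ∧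
      RelabelCompatible φ c (ve - 1) vi i (rotLabel ve i))
    (s : Multiset OEdge) :
    delta ⟨ve, vi, s⟩ = c • delta ⟨ve, vi, s.map (OEdge.relabel φ)⟩ := by
  by_cases hs : IsSimple ⟨ve, vi, s⟩
  swap
  · rw [delta_eq_zero hs, delta_eq_zero ((isSimple_relabel_iff φ h1 h2).not.2 hs), smul_zero]
  have hinj : (OEdge.relabel φ).Injective := by
    rintro ⟨a, b, l⟩ ⟨a', b', l'⟩ h
    simpa [OEdge.relabel] using h
  rw [delta_eq hs, delta_eq (hs.relabel φ h1 h2), smul_add]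
  congr 1
  · have hreg : ∀ e, isRegular ⟨ve, vi, s.map (OEdge.relabel φ)⟩ (e.relabel φ) ↔
        isRegular ⟨ve, vi, s⟩ e := by
      intro e
      simp [isRegular, OEdge.relabel, h1]
    rw [Multiset.smul_sum, Multiset.filter_map, Multiset.map_map, Multiset.map_map]
    simp only [Function.comp_def, hreg]
    congr 1
    refine Multiset.map_congr rfl fun e he => ?_
    obtain ⟨he, hr⟩ := Multiset.mem_filter.1 he
    have hlt := hs.1.1 e he
    have := (hE e.src e.tgt hr.1 hr.2 hlt.1 hlt.2).smul_cls φ.injective (s.erase e)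
    rw [Multiset.map_erase _ hinj] at this
    exact this
  · rw [Finset.smul_sum]
    refine Finset.sum_equiv φ (fun i => ?_) fun i hi => ?_
    · simp only [mem_arcIdx, h1]
    · rw [← (hA i hi).1]
      exact (hA i hi).2.smul_cls φ.injective s

theorem relabelCompatible_swap_of_lt {ve vi ve' vi' k i j : ℕ} (hk : ve ≤ k)
    (hk' : k + 1 < ve + vi) (hij : i < j) (hjn : j < ve + vi)
    (h : ve' = ve ∧ vi' = vi - 1 ∧ ve ≤ j ∨ ve' = ve - 1 ∧ vi' = vi ∧ j < ve) :
    RelabelCompatible (Equiv.swap k (k + 1)) (-1) ve' vi' i j := by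
  rcases Nat.lt_or_ge j k with hjk | hjk
  · have h1 : Equiv.swap k (k + 1) i = i := Equiv.swap_apply_of_ne_of_ne (by omega) (by omega)
    have h2 : Equiv.swap k (k + 1) j = j := Equiv.swap_apply_of_ne_of_ne (by omega) (by omega)
    refine ⟨Equiv.swap (k - 1) (k - 1 + 1), -1, fun x => ?_, fun t => ?_, ?_⟩
    · rw [h1, h2, mergeMap_of_lt hij, mergeMap_of_lt hij, Equiv.swap_apply_def,
        Equiv.swap_apply_def]
      split_ifs <;> omega
    · exact cls_swap ve' (by omega) (by omega) t
    · rw [h1, h2, mul_comm]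
  rcases Nat.lt_or_ge (k + 1) j with hkj | hkj
  · have h2 : Equiv.swap k (k + 1) j = j := Equiv.swap_apply_of_ne_of_ne (by omega) (by omega)
    have h1 : Equiv.swap k (k + 1) i < j := by rw [Equiv.swap_apply_def]; grind
    refine ⟨Equiv.swap k (k + 1), -1, fun x => ?_, fun t => ?_, ?_⟩
    · rw [h2, mergeMap_of_lt h1, mergeMap_of_lt hij]
      simp only [Equiv.swap_apply_def]
      split_ifs <;> omega
    · exact cls_swap ve' (by omega) (by omega) t
    · rw [h2, csign_of_lt h1, csign_of_lt hij, mul_comm]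
  refine ⟨id, 1, fun x => ?_, fun t => ?_, ?_⟩
  · simp only [Equiv.swap_apply_def, mergeMap, id]
    grind
  · simp [show OEdge.relabel id = id from rfl]
  · rw [csign_of_lt hij]
    obtain rfl | rfl : j = k ∨ j = k + 1 := by omega
    · rw [Equiv.swap_apply_left, Equiv.swap_apply_of_ne_of_ne (by omega) (by omega),
        csign_of_lt (by omega)]
      simp [pow_succ]
    · rcases eq_or_ne i k with rfl | hik
      · rw [Equiv.swap_apply_left, Equiv.swap_apply_right, csign_of_gt (by omega)]
        simp [pow_succ]
      · rw [Equiv.swap_apply_right, Equiv.swap_apply_of_ne_of_ne hik (by omega),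
          csign_of_lt (by omega)]
        simp [pow_succ]

theorem delta_swap (ve : ℕ) {vi k : ℕ} (hk : ve ≤ k) (hk' : k + 1 < ve + vi)
    (s : Multiset OEdge) :
    delta ⟨ve, vi, s⟩ =
      (-1 : ℝ) • delta ⟨ve, vi, s.map (OEdge.relabel (Equiv.swap k (k + 1)))⟩ := by
  refine delta_relabel _ _ (fun v => ?_) (fun v => ?_) ?_ ?_ s
  · rw [Equiv.swap_apply_def]; grind
  · rw [Equiv.swap_apply_def]; grind
  · intro i j hij hn hi hj
    rcases lt_or_gt_of_ne hij with h | h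
    · exact relabelCompatible_swap_of_lt hk hk' h hj (.inl ⟨rfl, rfl, by omega⟩)
    · exact (relabelCompatible_swap_of_lt hk hk' h hi (.inl ⟨rfl, rfl, by omega⟩)).swap
        (Equiv.injective _) h.ne
  · intro i hi
    have hij := rotLabel_ne hi
    have hi' := (mem_arcIdx.1 hi).2
    have hj' := rotLabel_lt_iff.2 hi'
    refine ⟨?_, ?_⟩
    · rw [Equiv.swap_apply_of_ne_of_ne, Equiv.swap_apply_of_ne_of_ne (a := k) (x := i)] <;> omega
    rcases lt_or_gt_of_ne hij with h | h
    · exact relabelCompatible_swap_of_lt hk hk' h (by omega) (.inr ⟨rfl, rfl, hj'⟩)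
    · exact (relabelCompatible_swap_of_lt hk hk' h (by omega) (.inr ⟨rfl, rfl, hi'⟩)).swap
        (Equiv.injective _) h.ne

theorem relabelCompatible_rotate_edge {ve vi i j : ℕ} (hij : i < j) (hj : ve ≤ j) :
    RelabelCompatible (rotLabel ve) ((-1) ^ (ve - 1)) ve vi i j := by
  have h2 : rotLabel ve j = j := by rw [rotLabel_apply]; grind
  have h1 : rotLabel ve i < j := by rw [rotLabel_apply]; grind
  refine ⟨rotLabel ve, (-1) ^ (ve - 1), fun x => ?_, cls_rotate ve vi, ?_⟩
  · rw [h2, mergeMap_of_lt h1, mergeMap_of_lt hij]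
    simp only [rotLabel_apply]
    split_ifs <;> omega
  · rw [h2, csign_of_lt h1, csign_of_lt hij, mul_comm]

theorem relabelCompatible_rotate_arc {ve vi i : ℕ} (hi : i ∈ arcIdx ve) :
    RelabelCompatible (rotLabel ve) ((-1) ^ (ve - 1)) (ve - 1) vi i (rotLabel ve i) := by
  rw [mem_arcIdx] at hi
  obtain ⟨n, rfl⟩ : ∃ n, ve = n + 2 := ⟨ve - 2, by omega⟩
  have hpow : ((-1 : ℝ) ^ n) * (-1) ^ n = 1 := by rw [← mul_pow]; simp
  rcases Nat.lt_or_ge (i + 1) (n + 2) with h1 | h1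
  · have e1 : rotLabel (n + 2) i = i + 1 := by rw [rotLabel_apply, if_pos h1]
    refine ⟨rotLabel (n + 1), (-1) ^ n, fun x => ?_, cls_rotate (n + 1) vi, ?_⟩
    · rw [e1]
      simp only [rotLabel_apply, mergeMap]
      grind
    · rw [e1, csign_of_lt (Nat.lt_succ_self i)]
      rcases Nat.lt_or_ge (i + 2) (n + 2) with h2 | h2
      · have e2 : rotLabel (n + 2) (i + 1) = i + 2 := by rw [rotLabel_apply, if_pos h2]
        rw [e2, csign_of_lt (Nat.lt_succ_self _)]
        simp [pow_succ]; ring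
      · obtain rfl : i = n := by omega
        have e2 : rotLabel (i + 2) (i + 1) = 0 := by rw [rotLabel_apply]; simp
        rw [e2, csign_of_gt (by omega)]
        simp [pow_succ]
  · obtain rfl : i = n + 1 := by omega
    have e1 : rotLabel (n + 2) (n + 1) = 0 := by rw [rotLabel_apply]; simp
    have e2 : rotLabel (n + 2) 0 = 1 := by rw [rotLabel_apply]; simp
    refine ⟨id, 1, fun x => ?_, fun t => ?_, ?_⟩
    · rw [e1, e2]
      simp only [rotLabel_apply, mergeMap, id]
      grind
    · simp [show OEdge.relabel id = id from rfl]
    · rw [e1, e2, csign_of_gt (by omega), csign_of_lt (by omega)]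
      simp

theorem delta_rotate (ve vi : ℕ) (s : Multiset OEdge) :
    delta ⟨ve, vi, s⟩ =
      ((-1 : ℝ) ^ (ve - 1)) • delta ⟨ve, vi, s.map (OEdge.relabel (rotLabel ve))⟩ := by
  refine delta_relabel _ _ (fun v => rotLabel_lt_iff) (fun v => ?_) ?_ ?_ s
  · rw [rotLabel_apply]; grind
  · intro i j hij hn hi hj
    rcases lt_or_gt_of_ne hij with h | h
    · exact relabelCompatible_rotate_edge h (by omega)
    · exact (relabelCompatible_rotate_edge h (by omega)).swap (Equiv.injective _) h.ne
  · exact fun i hi => ⟨rfl, relabelCompatible_rotate_arc hi⟩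

end OddGraph

theorem OEdge.contract_comm {i j : ℕ} {f : OEdge} (h : ¬OEdge.Parallel ⟨i, j, false⟩ f) :
    f.contract j i = f.contract i j := by
  unfold Parallel at h
  unfold contract
  rw [if_neg (by tauto), if_neg (by tauto), if_neg (by tauto), if_neg (by tauto),
    OddGraph.mergeMap_comm, OddGraph.mergeMap_comm j]

namespace OddGraph

theorem collapse_cons_self (ve vi : ℕ) (a : OEdge) (s : Multiset OEdge) :
    collapse ⟨ve, vi, a ::ₘ s⟩ a = ⟨ve, vi - 1, s.map (OEdge.contract a.src a.tgt)⟩ := by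
  simp [collapse]

theorem collapse_cons_of_mem (ve vi : ℕ) {a b : OEdge} {s : Multiset OEdge} (hb : b ∈ s) :
    collapse ⟨ve, vi, a ::ₘ s⟩ b = ⟨ve, vi - 1, a.contract b.src b.tgt ::ₘ
      (s.erase b).map (OEdge.contract b.src b.tgt)⟩ := by
  simp [collapse, Multiset.erase_cons_tail_of_mem hb]

theorem delta_flip (ve vi : ℕ) (a : OEdge) (s : Multiset OEdge) :
    delta ⟨ve, vi, flipOEdge a ::ₘ s⟩ = -delta ⟨ve, vi, a ::ₘ s⟩ := by
  by_cases hs : IsSimple ⟨ve, vi, a ::ₘ s⟩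
  swap
  · rw [delta_eq_zero hs, delta_eq_zero (isSimple_flip_iff.not.2 hs), neg_zero]
  have hreg : isRegular ⟨ve, vi, flipOEdge a ::ₘ s⟩ = isRegular ⟨ve, vi, a ::ₘ s⟩ := rfl
  have hrega : isRegular ⟨ve, vi, a ::ₘ s⟩ (flipOEdge a) ↔ isRegular ⟨ve, vi, a ::ₘ s⟩ a := by
    unfold isRegular flipOEdge
    grind
  have hrest : (((s.filter (isRegular ⟨ve, vi, a ::ₘ s⟩)).map fun e =>
        csign e.src e.tgt • (collapse ⟨ve, vi, flipOEdge a ::ₘ s⟩ e).cls).sum) =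
      -((s.filter (isRegular ⟨ve, vi, a ::ₘ s⟩)).map fun e =>
        csign e.src e.tgt • (collapse ⟨ve, vi, a ::ₘ s⟩ e).cls).sum := by
    rw [← Multiset.sum_map_neg]
    congr 1
    refine Multiset.map_congr rfl fun b hb => ?_
    obtain ⟨hb, hr⟩ := Multiset.mem_filter.1 hb
    rw [collapse_cons_of_mem _ _ hb, collapse_cons_of_mem _ _ hb, OEdge.contract_flip hr.1,
      cls_flip, smul_neg]
  rw [delta_eq hs, delta_eq (isSimple_flip_iff.2 hs), hreg, neg_add]
  congr 1
  · by_cases ha : isRegular ⟨ve, vi, a ::ₘ s⟩ a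
    · rw [Multiset.filter_cons_of_pos _ ha, Multiset.filter_cons_of_pos _ (hrega.2 ha),
        Multiset.map_cons, Multiset.map_cons, Multiset.sum_cons, Multiset.sum_cons, hrest, neg_add,
        collapse_cons_self, collapse_cons_self]
      congr 1
      have hf : flipOEdge a = ⟨a.tgt, a.src, a.lp⟩ := if_neg ha.1
      rw [hf, csign_swap ha.1, neg_smul]
      congr 4
      refine Multiset.map_congr rfl fun f hf => OEdge.contract_comm ?_
      change ¬a.Parallel f
      exact not_parallel_of_mem_erase hs.2.1 (Multiset.mem_cons_self a s) (by simpa using hf)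
    · rw [Multiset.filter_cons_of_neg _ ha, Multiset.filter_cons_of_neg _ (hrega.not.2 ha), hrest]
  · rw [← Finset.sum_neg_distrib]
    refine Finset.sum_congr rfl fun i hi => ?_
    rw [contractArc_eq, contractArc_eq, ← smul_neg]
    simp only [Multiset.map_cons]
    rw [OEdge.contract_flip (rotLabel_ne hi), cls_flip]

theorem delta_flips (ve vi : ℕ) (F : Multiset (OEdge × Bool)) (s : Multiset OEdge) :
    delta ⟨ve, vi, F.map Prod.fst + s⟩ =
      ((-1 : ℝ) ^ Multiset.card (F.filter fun p => p.2 = true)) •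
        delta ⟨ve, vi, F.map (fun p => if p.2 then flipOEdge p.1 else p.1) + s⟩ := by
  induction F using Multiset.induction_on generalizing s with
  | empty => simp
  | cons p F ih =>
    obtain ⟨a, b⟩ := p
    have h := ih (a ::ₘ s)
    rw [Multiset.map_cons, Multiset.map_cons, Multiset.cons_add, ← Multiset.add_cons, h,
      Multiset.add_cons]
    cases b
    · simp
    · simp [delta_flip, pow_succ]

theorem delta_perm (ve vi : ℕ) (s : Multiset OEdge) (π : Equiv.Perm (Fin vi)) (r : ℕ) :
    delta ⟨ve, vi, s⟩ = (((Equiv.Perm.sign π : ℤ) : ℝ) *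
      ((Equiv.Perm.sign (finRotate ve ^ r) : ℤ) : ℝ)) •
        delta ⟨ve, vi, s.map (permOEdge ve vi π r)⟩ := by
  induction r generalizing s with
  | zero =>
    have key : ∀ π : Equiv.Perm (Fin vi), ∀ s : Multiset OEdge, delta ⟨ve, vi, s⟩ =
        ((Equiv.Perm.sign π : ℤ) : ℝ) • delta ⟨ve, vi, s.map (permOEdge ve vi π 0)⟩ := by
      intro π
      have hone : ∀ s : Multiset OEdge, delta ⟨ve, vi, s⟩ =
          ((Equiv.Perm.sign (1 : Equiv.Perm (Fin vi)) : ℤ) : ℝ) •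
            delta ⟨ve, vi, s.map (permOEdge ve vi 1 0)⟩ := by
        simp [permOEdge_one_zero]
      rcases vi with _ | n
      · rw [Subsingleton.elim π 1]
        exact hone
      have hπ := Equiv.Perm.mclosure_swap_castSucc_succ n ▸ Submonoid.mem_top π
      induction hπ using Submonoid.closure_induction with
      | mem x hx =>
        obtain ⟨k, rfl⟩ := hx
        intro s
        rw [permOEdge_swap, Equiv.Perm.sign_swap (by simp [Fin.ext_iff])]
        simpa [add_assoc] using delta_swap ve (vi := n + 1) (k := ve + k) (by omega) (by omega) s
      | one => exact hone
      | mul x y _ _ hx hy =>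
        intro s
        rw [hy s, hx, permOEdge_mul, smul_smul, Multiset.map_map]
        congr 1
        simp [mul_comm]
    simpa using key π s
  | succ r ih =>
    rw [delta_rotate, ih, permOEdge_add_one, ← permOEdge_rotate, Multiset.map_map, smul_smul]
    congr 1
    rcases ve with _ | n
    · simp [Subsingleton.elim (finRotate 0) 1]
    · simp [sign_finRotate, pow_succ]; ring

theorem delta_eq_smul {g g' : OddGraph} {ε : ℝ} (h : OddRel g g' ε) :
    g.delta = ε • g'.delta := by
  obtain ⟨ve, vi, s⟩ := g
  obtain ⟨ve', vi', s'⟩ := g'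
  obtain ⟨rfl, rfl, π, r, F, h1, h2, rfl⟩ := h
  have := delta_flips ve' vi' F 0
  rw [add_zero, add_zero, h1, ← h2] at this
  rw [delta_perm ve' vi' s π r, this, smul_smul]

end OddGraph

/-- The coboundary operator of the odd graph complex. -/
noncomputable def oddDelta : Do →ₗ[ℝ] Do :=
  oddRelations.liftQ (oddRelations.mkQ ∘ₗ deltaFree) <| by
    have hsingle : ∀ g : OddGraph,
        (oddRelations.mkQ ∘ₗ deltaFree) (Finsupp.single g 1) = g.delta := by
      intro g
      simp [deltaFree, OddGraph.delta]
    refine Submodule.span_le.2 ?_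
    rintro x (((⟨g, h, rfl⟩ | ⟨g, h, rfl⟩) | ⟨g, h, rfl⟩) | ⟨g, g', ε, h, rfl⟩)
    · exact (hsingle g).trans (OddGraph.delta_eq_zero fun h' => h h'.1)
    · exact (hsingle g).trans (OddGraph.delta_eq_zero fun h' => h'.2.1 h)
    · exact (hsingle g).trans (OddGraph.delta_eq_zero fun h' => h'.2.2 h)
    · rw [SetLike.mem_coe, LinearMap.mem_ker, map_sub, map_smul, hsingle, hsingle,
        OddGraph.delta_eq_smul h, sub_self]

theorem oddDelta_cls (g : OddGraph) : oddDelta g.cls = g.delta := by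
  simp [oddDelta, OddGraph.cls, OddGraph.delta, deltaFree]

/-- An edge which is neither a small loop nor a chord, the external vertices being those
smaller than `n`. -/
def OEdge.IsRegularAt (n : ℕ) (e : OEdge) : Prop := e.src ≠ e.tgt ∧ ¬(e.src < n ∧ e.tgt < n)

namespace OddGraph

theorem delta_map {s : Multiset OEdge} (hs : ¬HasParallel s) (ψ : OEdge → OEdge) (ve vi : ℕ)
    (hψ : ¬HasParallel (s.map ψ) → IsSimple ⟨ve, vi, s.map ψ⟩) :
    delta ⟨ve, vi, s.map ψ⟩ =
      (∑ f ∈ s.toFinset,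
        if (ψ f).IsRegularAt ve ∧ ¬∃ h ∈ s.erase f, (ψ f).Parallel (ψ h) then
          csign (ψ f).src (ψ f).tgt • cls ⟨ve, vi - 1,
            ((s.erase f).map ψ).map (OEdge.contract (ψ f).src (ψ f).tgt)⟩ else 0) +
      ∑ i ∈ arcIdx ve, csign i (rotLabel ve i) •
        cls ⟨ve - 1, vi, (s.map ψ).map (OEdge.contract i (rotLabel ve i))⟩ := by
  by_cases hp : HasParallel (s.map ψ)
  · rw [delta_eq_zero fun h : IsSimple ⟨ve, vi, s.map ψ⟩ => h.2.1 hp, Finset.sum_eq_zero, Finset.sum_eq_zero, add_zero]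
    · intro i _
      rw [cls_eq_zero_of_hasParallel (hp.contract _ _), smul_zero]
    · intro f hf
      refine ite_eq_right_iff.2 fun ⟨_, hf'⟩ => ?_
      rw [cls_eq_zero_of_hasParallel, smul_zero]
      refine HasParallel.contract ?_ _ _
      obtain ⟨a, ha, b, hb, hab⟩ := (hasParallel_map _ _).1 hp
      have hnd := nodup_of_not_hasParallel hs
      rw [hnd.mem_erase_iff] at hb
      have hfa : f ≠ a := by
        rintro rfl
        exact hf' ⟨b, hnd.mem_erase_iff.2 hb, hab⟩
      have hfb : f ≠ b := by
        rintro rfl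
        exact hf' ⟨a, hnd.mem_erase_iff.2 ⟨hfa.symm, ha⟩, hab.symm⟩
      refine (hasParallel_map _ _).2 ⟨a, hnd.mem_erase_iff.2 ⟨hfa.symm, ha⟩, b, ?_, hab⟩
      rw [(hnd.erase f).mem_erase_iff, hnd.mem_erase_iff]
      exact ⟨hb.1, hfb.symm, hb.2⟩
  · rw [delta_eq (hψ hp)]
    congr 1
    rw [Multiset.filter_map, Multiset.map_map, ← Finset.sum_filter]
    have hval : (s.toFinset.filter fun f =>
        (ψ f).IsRegularAt ve ∧ ¬∃ h ∈ s.erase f, (ψ f).Parallel (ψ h)).val =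
        s.filter (isRegular ⟨ve, vi, s.map ψ⟩ ∘ ψ) := by
      rw [Finset.filter_val, Multiset.toFinset_val, (nodup_of_not_hasParallel hs).dedup]
      refine Multiset.filter_congr fun f hf => ⟨fun h => h.1, fun h => ⟨h, ?_⟩⟩
      rintro ⟨a, ha, h⟩
      exact hp ((hasParallel_map _ _).2 ⟨f, hf, a, ha, h⟩)
    rw [Finset.sum, hval]
    congr 1
    refine Multiset.map_congr rfl fun f hf => ?_
    rw [Multiset.map_erase_of_mem _ _ (Multiset.mem_filter.1 hf).1]
    rfl

theorem sum_sum_eq_zero_of_antisymm {α : Type*} (s : Finset α) (X : α → α → Do)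
    (h : ∀ a ∈ s, ∀ b ∈ s, X a b = -X b a) : ∑ a ∈ s, ∑ b ∈ s, X a b = 0 := by
  have h1 : ∑ a ∈ s, ∑ b ∈ s, X a b = -∑ a ∈ s, ∑ b ∈ s, X a b := by
    conv_lhs => rw [Finset.sum_comm]
    rw [← Finset.sum_neg_distrib]
    refine Finset.sum_congr rfl fun a ha => ?_
    rw [← Finset.sum_neg_distrib]
    exact Finset.sum_congr rfl fun b hb => h b hb a ha
  rw [eq_neg_iff_add_eq_zero, ← two_smul ℝ] at h1
  exact (IsUnit.smul_eq_zero (IsUnit.mk0 (2 : ℝ) two_ne_zero)).1 h1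

theorem mergeMap_lt_iff {i j n : ℕ} (h : ¬(i < n ∧ j < n)) (x : ℕ) :
    mergeMap i j x < n ↔ x < n ∨ ((x = i ∨ x = j) ∧ (i < n ∨ j < n)) := by
  unfold mergeMap
  grind

theorem mergeMap_lt_sub_one_iff {i j n : ℕ} (hij : i ≠ j) (hi : i < n) (hj : j < n) (x : ℕ) :
    mergeMap i j x < n - 1 ↔ x < n := by
  unfold mergeMap
  grind

theorem mergeMap_eq_self {i j n : ℕ} (h : ¬(i < n ∧ j < n)) {x : ℕ} (hx : x < n) :
    mergeMap i j x = x := by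
  unfold mergeMap
  grind

/-- The contribution to `δ (δ g)` of contracting first `e` and then `f`. -/
noncomputable def edgeEdge (g : OddGraph) (e f : OEdge) : Do :=
  if e.IsRegularAt g.ve ∧ (f.contract e.src e.tgt).IsRegularAt g.ve ∧
      ¬∃ h ∈ (g.edges.erase e).erase f,
        (f.contract e.src e.tgt).Parallel (h.contract e.src e.tgt) then
    (csign e.src e.tgt * csign (f.contract e.src e.tgt).src (f.contract e.src e.tgt).tgt) •
      cls ⟨g.ve, g.vi - 1 - 1,
        (((g.edges.erase e).erase f).map (OEdge.contract e.src e.tgt)).map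
          (OEdge.contract (f.contract e.src e.tgt).src (f.contract e.src e.tgt).tgt)⟩
  else 0

theorem isRegularAt_contract {e f : OEdge} (hef : ¬e.Parallel f) (n : ℕ) :
    e.IsRegularAt n ∧ (f.contract e.src e.tgt).IsRegularAt n →
      f.IsRegularAt n ∧ (e.contract f.src f.tgt).IsRegularAt n := by
  rintro ⟨he, hf⟩
  have hf' : f.IsRegularAt n := by
    unfold OEdge.IsRegularAt at *
    rw [OEdge.src_contract, OEdge.tgt_contract, mergeMap_lt_iff he.2,
      mergeMap_lt_iff he.2] at hf
    refine ⟨fun h => hf.1 (by rw [h]), by tauto⟩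
  refine ⟨hf', ?_⟩
  unfold OEdge.IsRegularAt OEdge.Parallel at *
  rw [OEdge.src_contract, OEdge.tgt_contract, mergeMap_lt_iff he.2,
      mergeMap_lt_iff he.2, Ne, mergeMap_eq_iff he.1] at hf
  rw [OEdge.src_contract, OEdge.tgt_contract, mergeMap_lt_iff hf'.2,
      mergeMap_lt_iff hf'.2, Ne, mergeMap_eq_iff hf'.1]
  grind

theorem edgeEdge_self (g : OddGraph) (e : OEdge) : g.edgeEdge e e = 0 := by
  refine if_neg fun h => h.2.1.1 ?_
  rw [OEdge.src_contract, OEdge.tgt_contract]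
  simp [mergeMap]

theorem edgeEdge_antisymm {g : OddGraph} (hg : ¬g.hasDoubleEdge) {e f : OEdge}
    (he : e ∈ g.edges) (hf : f ∈ g.edges) : g.edgeEdge e f = -g.edgeEdge f e := by
  rcases eq_or_ne e f with rfl | hne
  · rw [edgeEdge_self, neg_zero]
  have hnd := nodup_of_not_hasParallel hg
  have hef : ¬e.Parallel f :=
    not_parallel_of_mem_erase hg he (hnd.mem_erase_iff.2 ⟨hne.symm, hf⟩)
  have hfe : ¬f.Parallel e := fun h => hef h.symm
  have hrest : ∀ h ∈ (g.edges.erase e).erase f, ¬e.Parallel h ∧ ¬f.Parallel h := by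
    intro h hh
    rw [(hnd.erase e).mem_erase_iff, hnd.mem_erase_iff] at hh
    exact ⟨not_parallel_of_mem_erase hg he (hnd.mem_erase_iff.2 ⟨hh.2.1, hh.2.2⟩),
      not_parallel_of_mem_erase hg hf (hnd.mem_erase_iff.2 ⟨hh.1, hh.2.2⟩)⟩
  by_cases hr : e.IsRegularAt g.ve ∧ (f.contract e.src e.tgt).IsRegularAt g.ve
  swap
  · rw [edgeEdge, edgeEdge, if_neg (by tauto), if_neg, neg_zero]
    exact fun h => hr (isRegularAt_contract hfe _ ⟨h.1, h.2.1⟩)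
  have hr' := isRegularAt_contract hef _ hr
  have htri : (∃ h ∈ (g.edges.erase e).erase f,
        (f.contract e.src e.tgt).Parallel (h.contract e.src e.tgt)) ↔
      ∃ h ∈ (g.edges.erase f).erase e,
        (e.contract f.src f.tgt).Parallel (h.contract f.src f.tgt) := by
    rw [Multiset.erase_comm]
    refine ⟨fun ⟨h, hh, hp⟩ => ⟨h, hh, ?_⟩, fun ⟨h, hh, hp⟩ => ⟨h, hh, ?_⟩⟩
    · rw [Multiset.erase_comm] at hh
      exact OEdge.parallel_contract_rotate hr.1.1 hr'.1.1 hef (hrest h hh).2 hp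
    · rw [Multiset.erase_comm] at hh
      exact OEdge.parallel_contract_rotate hr'.1.1 hr.1.1 hfe (hrest h hh).1 hp
  by_cases ht : ∃ h ∈ (g.edges.erase e).erase f,
        (f.contract e.src e.tgt).Parallel (h.contract e.src e.tgt)
  · rw [edgeEdge, edgeEdge, if_neg fun h => h.2.2 ht, if_neg fun h => h.2.2 (htri.1 ht), neg_zero]
  rw [edgeEdge, edgeEdge, if_pos ⟨hr.1, hr.2, ht⟩, if_pos ⟨hr'.1, hr'.2, htri.not.1 ht⟩, ← neg_smul]
  have hne1 : ¬(e.src = f.src ∧ e.tgt = f.tgt) := fun h => hef (.inl ⟨h.1.symm, h.2.symm⟩)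
  have hne2 : ¬(e.src = f.tgt ∧ e.tgt = f.src) := fun h => hef (.inr ⟨h.2.symm, h.1.symm⟩)
  simp only [OEdge.src_contract, OEdge.tgt_contract]
  rw [(mergeCommute hr.1.1 hr'.1.1 hne1 hne2).2, Multiset.erase_comm, Multiset.map_map,
    Multiset.map_map]
  congr 3
  refine Multiset.map_congr rfl fun h hh => ?_
  refine OEdge.contract_contract hr.1.1 hr'.1.1 hne1 hne2 (.inl fun hp => ht ⟨h, ?_, ?_⟩)
  · rwa [Multiset.erase_comm]
  · refine OEdge.Parallel.symm ?_
    simpa only [OEdge.Parallel, OEdge.src_contract, OEdge.tgt_contract] using hp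

/-- The contribution to `δ (δ g)` of contracting first the arc starting at `i` and then the arc
starting at `k`. -/
noncomputable def arcArc (g : OddGraph) (i k : ℕ) : Do :=
  if i ≠ k ∧ 3 ≤ g.ve then
    (csign i (rotLabel g.ve i) * csign (mergeMap i (rotLabel g.ve i) k)
        (mergeMap i (rotLabel g.ve i) (rotLabel g.ve k))) •
      cls ⟨g.ve - 1 - 1, g.vi, (g.edges.map (OEdge.contract i (rotLabel g.ve i))).map
        (OEdge.contract (mergeMap i (rotLabel g.ve i) k)
          (mergeMap i (rotLabel g.ve i) (rotLabel g.ve k)))⟩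
  else 0

theorem arcArc_antisymm {g : OddGraph} {i k : ℕ} (hi : i ∈ arcIdx g.ve) (hk : k ∈ arcIdx g.ve) :
    g.arcArc i k = -g.arcArc k i := by
  by_cases h : i ≠ k ∧ 3 ≤ g.ve
  swap
  · rw [arcArc, arcArc, if_neg h, if_neg (by tauto), neg_zero]
  rw [arcArc, arcArc, if_pos h, if_pos ⟨h.1.symm, h.2⟩, ← neg_smul]
  have hi' := rotLabel_ne hi
  have hk' := rotLabel_ne hk
  have hne1 : ¬(i = k ∧ rotLabel g.ve i = rotLabel g.ve k) := fun h' => h.1 h'.1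
  have hne2 : ¬(i = rotLabel g.ve k ∧ rotLabel g.ve i = k) := by
    rw [mem_arcIdx] at hi hk
    rw [rotLabel_apply, rotLabel_apply]
    grind
  rw [(mergeCommute hi' hk' hne1 hne2).2, Multiset.map_map, Multiset.map_map]
  congr 3
  refine Multiset.map_congr rfl fun f _ => OEdge.contract_contract hi' hk' hne1 hne2 (.inr ?_)
  have := (rotLabel g.ve).injective.ne h.1
  tauto

theorem sum_arcIdx_sub_one {n i : ℕ} (hi : i ∈ arcIdx n) (T : ℕ → ℕ → Do) :
    ∑ j ∈ arcIdx (n - 1), T j (rotLabel (n - 1) j) = ∑ k ∈ arcIdx n,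
      if i ≠ k ∧ 3 ≤ n then
        T (mergeMap i (rotLabel n i) k) (mergeMap i (rotLabel n i) (rotLabel n k)) else 0 := by
  have hi' := mem_arcIdx.1 hi
  rcases Nat.lt_or_ge n 3 with h | h
  · rw [Finset.sum_eq_zero (s := arcIdx n) fun k _ => if_neg (by omega)]
    rw [arcIdx, if_neg (by omega), Finset.sum_empty]
  rw [← Finset.sum_filter]
  symm
  refine Finset.sum_nbij' (mergeMap i (rotLabel n i)) (fun j => if j < i then j else j + 1)
    ?_ ?_ ?_ ?_ ?_
  · intro k hk
    simp only [Finset.mem_filter, mem_arcIdx, mergeMap, rotLabel_apply] at *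
    grind
  · intro k hk
    simp only [Finset.mem_filter, mem_arcIdx] at *
    grind
  · intro k hk
    simp only [Finset.mem_filter, mem_arcIdx, mergeMap, rotLabel_apply] at *
    grind
  · intro k hk
    simp only [mem_arcIdx, mergeMap, rotLabel_apply] at *
    grind
  · intro k hk
    congr 1
    simp only [Finset.mem_filter, mem_arcIdx, mergeMap, rotLabel_apply] at *
    grind

end OddGraph

theorem OEdge.isRegularAt_contract_arc {i j n : ℕ} (hij : i ≠ j) (hi : i < n) (hj : j < n)
    (e : OEdge) : (e.contract i j).IsRegularAt (n - 1) ↔ e.IsRegularAt n := by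
  unfold IsRegularAt
  rw [src_contract, tgt_contract, OddGraph.mergeMap_lt_sub_one_iff hij hi hj,
    OddGraph.mergeMap_lt_sub_one_iff hij hi hj, Ne, OddGraph.mergeMap_eq_iff hij]
  grind

theorem OEdge.IsRegularAt.of_parallel {n : ℕ} {e f : OEdge} (h : e.IsRegularAt n)
    (hp : e.Parallel f) : f.IsRegularAt n := by
  unfold IsRegularAt Parallel at *
  grind

namespace OddGraph

/-- The contribution to `δ (δ g)` of contracting first the edge `e` and then the arc starting
at `i`. -/
noncomputable def edgeArc (g : OddGraph) (e : OEdge) (i : ℕ) : Do :=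
  if e.IsRegularAt g.ve then
    (csign e.src e.tgt * csign i (rotLabel g.ve i)) •
      cls ⟨g.ve - 1, g.vi - 1, ((g.edges.erase e).map (OEdge.contract e.src e.tgt)).map
        (OEdge.contract i (rotLabel g.ve i))⟩
  else 0

/-- The contribution to `δ (δ g)` of contracting first the arc starting at `i` and then the
edge `e`. -/
noncomputable def arcEdge (g : OddGraph) (i : ℕ) (e : OEdge) : Do :=
  if (e.contract i (rotLabel g.ve i)).IsRegularAt (g.ve - 1) ∧
      ¬∃ h ∈ g.edges.erase e,
        (e.contract i (rotLabel g.ve i)).Parallel (h.contract i (rotLabel g.ve i)) then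
    (csign i (rotLabel g.ve i) * csign (e.contract i (rotLabel g.ve i)).src
        (e.contract i (rotLabel g.ve i)).tgt) •
      cls ⟨g.ve - 1, g.vi - 1, ((g.edges.erase e).map (OEdge.contract i (rotLabel g.ve i))).map
        (OEdge.contract (e.contract i (rotLabel g.ve i)).src
          (e.contract i (rotLabel g.ve i)).tgt)⟩
  else 0

/-- Two edges joining an internal vertex `w` to the endpoints of an arc. -/
theorem contract_contract_of_triangle {i j w n : ℕ} (hij : i ≠ j) (hi : i < n) (hj : j < n)
    (hw : n ≤ w) {e h : OEdge} (he : (e.src = i ∧ e.tgt = w) ∨ (e.src = w ∧ e.tgt = i))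
    (hh : (h.src = j ∧ h.tgt = w) ∨ (h.src = w ∧ h.tgt = j)) :
    (∀ f, ¬e.Parallel f → ¬h.Parallel f →
      (f.contract e.src e.tgt).contract i j = (f.contract h.src h.tgt).contract i j) ∧
    ((csign e.src e.tgt = csign h.src h.tgt ∧ (h.contract e.src e.tgt).contract i j =
        flipOEdge ((e.contract h.src h.tgt).contract i j)) ∨
      (csign e.src e.tgt = -csign h.src h.tgt ∧ (h.contract e.src e.tgt).contract i j =
        (e.contract h.src h.tgt).contract i j)) := by
  have hiw : i < w := hi.trans_le hw
  have hjw : j < w := hj.trans_le hw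
  obtain ⟨a, b, l⟩ := e
  obtain ⟨c, d, l'⟩ := h
  have m1 : ∀ x, mergeMap i w x = if x = w then i else if w < x then x - 1 else x := by
    intro x; rw [mergeMap_of_lt hiw]
  have m2 : ∀ x, mergeMap j w x = if x = w then j else if w < x then x - 1 else x := by
    intro x; rw [mergeMap_of_lt hjw]
  have m3 : ∀ x, mergeMap w i x = if x = w then i else if w < x then x - 1 else x := by
    intro x; rw [mergeMap_comm, m1]
  have m4 : ∀ x, mergeMap w j x = if x = w then j else if w < x then x - 1 else x := by
    intro x; rw [mergeMap_comm, m2]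
  have mij : ∀ x, mergeMap i j (if x = w then i else if w < x then x - 1 else x) =
      mergeMap i j (if x = w then j else if w < x then x - 1 else x) := by
    intro x
    split_ifs
    · simp [mergeMap]
    · rfl
    · rfl
  simp only at he hh
  constructor
  · intro f hef hhf
    unfold OEdge.Parallel at hef hhf
    rcases he with ⟨rfl, rfl⟩ | ⟨rfl, rfl⟩ <;> rcases hh with ⟨rfl, h⟩ | ⟨h, rfl⟩ <;> subst h <;>
      (ext
       · simp only [OEdge.src_contract, m1, m2, m3, m4, mij]
       · simp only [OEdge.tgt_contract, m1, m2, m3, m4, mij]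
       · simp only [OEdge.lp_contract, OEdge.src_contract, OEdge.tgt_contract, m1, m2, m3, m4]
         simp only at hef hhf
         grind)
  · have c1 := csign_of_lt hiw
    have c2 := csign_of_lt hjw
    have c3 := csign_swap hiw.ne
    have c4 := csign_swap hjw.ne
    rcases he with ⟨rfl, rfl⟩ | ⟨rfl, rfl⟩ <;> rcases hh with ⟨rfl, h⟩ | ⟨h, rfl⟩ <;> subst h
    · refine .inl ⟨by rw [c1, c2], ?_⟩
      simp [OEdge.contract, flipOEdge, mergeMap, hiw.ne, hiw.ne', hjw.ne, hjw.ne', hij, hij.symm,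
        hiw.le, hjw.le]
    · refine .inr ⟨by rw [c1, c4, c2, neg_neg], ?_⟩
      simp [OEdge.contract, mergeMap, hiw.ne, hiw.ne', hjw.ne, hjw.ne', hij, hij.symm, hiw.le,
        hjw.le]
    · refine .inr ⟨by rw [c3, c1, c2], ?_⟩
      simp [OEdge.contract, mergeMap, hiw.ne, hiw.ne', hjw.ne, hjw.ne', hij, hij.symm, hiw.le,
        hjw.le]
    · refine .inl ⟨by rw [c3, c4, c1, c2], ?_⟩
      simp [OEdge.contract, flipOEdge, mergeMap, hiw.ne, hiw.ne', hjw.ne, hjw.ne', hij, hij.symm,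
        hiw.le, hjw.le]

theorem edgeArc_add_of_triangle {g : OddGraph} (hg : ¬g.hasDoubleEdge) {e h : OEdge} {i w : ℕ}
    (hi : i ∈ arcIdx g.ve) (he : e ∈ g.edges) (hh : h ∈ g.edges) (hne : e ≠ h) (hw : g.ve ≤ w)
    (hei : (e.src = i ∧ e.tgt = w) ∨ (e.src = w ∧ e.tgt = i))
    (hhi : (h.src = rotLabel g.ve i ∧ h.tgt = w) ∨ (h.src = w ∧ h.tgt = rotLabel g.ve i)) :
    g.edgeArc e i + g.edgeArc h i = 0 := by
  have hi' := (mem_arcIdx.1 hi).2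
  have hj' : rotLabel g.ve i < g.ve := rotLabel_lt_iff.2 hi'
  have hnd := nodup_of_not_hasParallel hg
  obtain ⟨s, hs⟩ := Multiset.exists_cons_of_mem he
  have hhs : h ∈ s := by
    rw [hs, Multiset.mem_cons] at hh
    exact hh.resolve_left hne.symm
  obtain ⟨t, rfl⟩ := Multiset.exists_cons_of_mem hhs
  have h1 : g.edges.erase e = h ::ₘ t := by rw [hs, Multiset.erase_cons_head]
  have h2 : g.edges.erase h = e ::ₘ t := by
    rw [hs, Multiset.cons_swap, Multiset.erase_cons_head]
  have hr1 : e.IsRegularAt g.ve := by unfold OEdge.IsRegularAt; omega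
  have hr2 : h.IsRegularAt g.ve := by unfold OEdge.IsRegularAt; omega
  obtain ⟨key, hsign⟩ := contract_contract_of_triangle (rotLabel_ne hi) hi' hj' hw hei hhi
  rw [edgeArc, edgeArc, if_pos hr1, if_pos hr2, h1, h2]
  simp only [Multiset.map_cons, Multiset.map_map]
  have hmap : t.map (OEdge.contract i (rotLabel g.ve i) ∘ OEdge.contract e.src e.tgt) =
      t.map (OEdge.contract i (rotLabel g.ve i) ∘ OEdge.contract h.src h.tgt) := by
    refine Multiset.map_congr rfl fun f hf => key f ?_ ?_
    · exact not_parallel_of_mem_erase hg he (by simp [h1, hf])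
    · exact not_parallel_of_mem_erase hg hh (by simp [h2, hf])
  rw [hmap]
  rcases hsign with ⟨hc, hl⟩ | ⟨hc, hl⟩
  · rw [hl, cls_flip, hc, smul_neg, neg_add_cancel]
  · rw [hl, hc, neg_mul, neg_smul, neg_add_cancel]

theorem edgeArc_add_of_parallel {g : OddGraph} (hg : ¬g.hasDoubleEdge) {e h : OEdge} {i : ℕ}
    (hi : i ∈ arcIdx g.ve) (he : e ∈ g.edges) (hh : h ∈ g.edges.erase e)
    (hr : e.IsRegularAt g.ve)
    (hp : (e.contract i (rotLabel g.ve i)).Parallel (h.contract i (rotLabel g.ve i))) :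
    g.edgeArc e i + g.edgeArc h i = 0 := by
  have hnd := nodup_of_not_hasParallel hg
  have hne := not_parallel_of_mem_erase hg he hh
  have hij := rotLabel_ne hi
  have hi' := (mem_arcIdx.1 hi).2
  have hj' : rotLabel g.ve i < g.ve := rotLabel_lt_iff.2 hi'
  rw [hnd.mem_erase_iff] at hh
  rw [OEdge.parallel_contract_iff hij] at hp
  unfold OEdge.Parallel at hne
  have key : (∃ w, g.ve ≤ w ∧ ((e.src = i ∧ e.tgt = w) ∨ (e.src = w ∧ e.tgt = i)) ∧
      ((h.src = rotLabel g.ve i ∧ h.tgt = w) ∨ (h.src = w ∧ h.tgt = rotLabel g.ve i))) ∨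
      ∃ w, g.ve ≤ w ∧ ((h.src = i ∧ h.tgt = w) ∨ (h.src = w ∧ h.tgt = i)) ∧
      ((e.src = rotLabel g.ve i ∧ e.tgt = w) ∨ (e.src = w ∧ e.tgt = rotLabel g.ve i)) := by
    unfold OEdge.IsRegularAt at hr
    rcases Nat.lt_or_ge e.src g.ve with hs | hs
    · by_cases h1 : e.src = i
      · exact .inl ⟨e.tgt, by omega, by grind, by grind⟩
      · exact .inr ⟨e.tgt, by omega, by grind, by grind⟩
    · by_cases h1 : e.tgt = i
      · exact .inl ⟨e.src, by omega, by grind, by grind⟩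
      · exact .inr ⟨e.src, by omega, by grind, by grind⟩
  rcases key with ⟨w, hw, h1, h2⟩ | ⟨w, hw, h1, h2⟩
  · exact edgeArc_add_of_triangle hg hi he hh.2 hh.1.symm hw h1 h2
  · rw [add_comm]
    exact edgeArc_add_of_triangle hg hi hh.2 he hh.1 hw h1 h2

theorem edgeArc_add_arcEdge {g : OddGraph} {e : OEdge} {i : ℕ}
    (hi : i ∈ arcIdx g.ve) (hn : ¬(e.IsRegularAt g.ve ∧ ∃ h ∈ g.edges.erase e,
      (e.contract i (rotLabel g.ve i)).Parallel (h.contract i (rotLabel g.ve i)))) :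
    g.edgeArc e i + g.arcEdge i e = 0 := by
  have hij := rotLabel_ne hi
  have hi' := (mem_arcIdx.1 hi).2
  have hj' : rotLabel g.ve i < g.ve := rotLabel_lt_iff.2 hi'
  have hiff := OEdge.isRegularAt_contract_arc hij hi' hj' e
  by_cases hr : e.IsRegularAt g.ve
  swap
  · rw [edgeArc, arcEdge, if_neg hr, if_neg fun h => hr (hiff.1 h.1), add_zero]
  have ht := fun h => hn ⟨hr, h⟩
  rw [edgeArc, arcEdge, if_pos hr, if_pos ⟨hiff.2 hr, ht⟩]
  have hne1 : ¬(i = e.src ∧ rotLabel g.ve i = e.tgt) := by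
    unfold OEdge.IsRegularAt at hr; omega
  have hne2 : ¬(i = e.tgt ∧ rotLabel g.ve i = e.src) := by
    unfold OEdge.IsRegularAt at hr; omega
  have hmi := mergeMap_eq_self hr.2 hi'
  have hmj := mergeMap_eq_self hr.2 hj'
  have hsign := (mergeCommute hij hr.1 hne1 hne2).2
  rw [hmi, hmj] at hsign
  simp only [OEdge.src_contract, OEdge.tgt_contract]
  rw [hsign, neg_smul, Multiset.map_map, Multiset.map_map, ← sub_eq_add_neg, sub_eq_zero]
  congr 2
  refine congrArg _ (Multiset.map_congr rfl fun f hf => ?_)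
  have := OEdge.contract_contract hij hr.1 hne1 hne2 (f := f) (.inl fun hp => ht ⟨f, hf, ?_⟩)
  · rw [hmi, hmj] at this
    exact this.symm
  · refine OEdge.Parallel.symm ?_
    simpa only [OEdge.Parallel, OEdge.src_contract, OEdge.tgt_contract] using hp

theorem parallel_contract_unique {i j n : ℕ} (hij : i ≠ j) (hi : i < n) (hj : j < n)
    {e f h : OEdge} (hr : e.IsRegularAt n) (hef : ¬e.Parallel f) (hhf : ¬h.Parallel f)
    (heh : ¬e.Parallel h) (hp : (e.contract i j).Parallel (f.contract i j))
    (hp' : (f.contract i j).Parallel (h.contract i j)) : False := by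
  have hend : ¬((e.src = i ∨ e.src = j) ∧ (e.tgt = i ∨ e.tgt = j)) := by
    rintro ⟨h1, h2⟩
    refine hr.2 ⟨?_, ?_⟩
    · rcases h1 with h1 | h1 <;> rwa [h1]
    · rcases h2 with h2 | h2 <;> rwa [h2]
  have hloop := hr.1
  clear hr
  rw [OEdge.parallel_contract_iff hij] at hp hp'
  unfold OEdge.Parallel at *
  grind

theorem sum_edgeArc_add_arcEdge {g : OddGraph} (hg : ¬g.hasDoubleEdge) {i : ℕ}
    (hi : i ∈ arcIdx g.ve) : ∑ e ∈ g.edges.toFinset, (g.edgeArc e i + g.arcEdge i e) = 0 := by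
  have hnd := nodup_of_not_hasParallel hg
  have hij := rotLabel_ne hi
  have hi' := (mem_arcIdx.1 hi).2
  have hj' : rotLabel g.ve i < g.ve := rotLabel_lt_iff.2 hi'
  have hterm : ∀ e ∈ g.edges.toFinset, g.edgeArc e i + g.arcEdge i e =
      if e.IsRegularAt g.ve ∧ ∃ h ∈ g.edges.erase e, (e.contract i (rotLabel g.ve i)).Parallel
        (h.contract i (rotLabel g.ve i)) then g.edgeArc e i else 0 := by
    intro e he
    split_ifs with h
    · rw [arcEdge, if_neg fun h' => h'.2 h.2, add_zero]
    · exact edgeArc_add_arcEdge hi h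
  rw [Finset.sum_congr rfl hterm, ← Finset.sum_filter]
  have hspec : ∀ e, ∃ h, (∃ h ∈ g.edges.erase e, (e.contract i (rotLabel g.ve i)).Parallel
      (h.contract i (rotLabel g.ve i))) → (h ∈ g.edges ∧ h ≠ e) ∧
        (e.contract i (rotLabel g.ve i)).Parallel (h.contract i (rotLabel g.ve i)) := by
    intro e
    by_cases h : ∃ h ∈ g.edges.erase e, (e.contract i (rotLabel g.ve i)).Parallel
      (h.contract i (rotLabel g.ve i))
    · obtain ⟨h, hh, hp⟩ := h
      exact ⟨h, fun _ => ⟨(hnd.mem_erase_iff.1 hh).symm, hp⟩⟩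
    · exact ⟨e, fun h' => absurd h' h⟩
  choose φ hφ using hspec
  have hmem : ∀ e ∈ g.edges.toFinset.filter (fun e => e.IsRegularAt g.ve ∧
      ∃ h ∈ g.edges.erase e, (e.contract i (rotLabel g.ve i)).Parallel
        (h.contract i (rotLabel g.ve i))),
      φ e ∈ g.edges.toFinset.filter (fun e => e.IsRegularAt g.ve ∧
        ∃ h ∈ g.edges.erase e, (e.contract i (rotLabel g.ve i)).Parallel
          (h.contract i (rotLabel g.ve i))) := by
    intro e he
    obtain ⟨he', hr, ht⟩ := Finset.mem_filter.1 he
    obtain ⟨⟨h1, h2⟩, h3⟩ := hφ e ht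
    refine Finset.mem_filter.2 ⟨Multiset.mem_toFinset.2 h1, ?_, e,
      hnd.mem_erase_iff.2 ⟨h2.symm, Multiset.mem_toFinset.1 he'⟩, h3.symm⟩
    rw [← OEdge.isRegularAt_contract_arc hij hi' hj'] at hr ⊢
    exact hr.of_parallel h3
  refine Finset.sum_involution (fun e _ => φ e) ?_ ?_ hmem ?_
  · intro e he
    obtain ⟨he', hr, ht⟩ := Finset.mem_filter.1 he
    obtain ⟨⟨h1, h2⟩, h3⟩ := hφ e ht
    exact edgeArc_add_of_parallel hg hi (Multiset.mem_toFinset.1 he')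
      (hnd.mem_erase_iff.2 ⟨h2, h1⟩) hr h3
  · intro e he _
    exact (hφ e (Finset.mem_filter.1 he).2.2).1.2
  · intro e he
    obtain ⟨he', hr, ht⟩ := Finset.mem_filter.1 he
    obtain ⟨⟨h1, h2⟩, h3⟩ := hφ e ht
    obtain ⟨⟨h4, h5⟩, h6⟩ := hφ (φ e) (Finset.mem_filter.1 (hmem e he)).2.2
    by_contra hne
    have he'' := Multiset.mem_toFinset.1 he'
    exact parallel_contract_unique hij hi' hj' hr
      (not_parallel_of_mem_erase hg he'' (hnd.mem_erase_iff.2 ⟨h2, h1⟩))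
      (not_parallel_of_mem_erase hg h4 (hnd.mem_erase_iff.2 ⟨h5.symm, h1⟩))
      (not_parallel_of_mem_erase hg he'' (hnd.mem_erase_iff.2 ⟨hne, h4⟩)) h3 h6

theorem delta_eq_sum {g : OddGraph} (hg : g.IsSimple) :
    g.delta = (∑ e ∈ g.edges.toFinset, if e.IsRegularAt g.ve then
        csign e.src e.tgt • (g.collapse e).cls else 0) +
      ∑ i ∈ arcIdx g.ve, csign i (rotLabel g.ve i) • (g.contractArc i (rotLabel g.ve i)).cls := by
  rw [delta_eq hg, ← Finset.sum_filter]
  congr 1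
  rw [Finset.sum, Finset.filter_val, Multiset.toFinset_val,
    (nodup_of_not_hasParallel hg.2.1).dedup]
  rfl

theorem smul_delta_collapse {g : OddGraph} (hg : g.IsSimple) {e : OEdge} (he : e ∈ g.edges)
    (hr : e.IsRegularAt g.ve) :
    csign e.src e.tgt • (g.collapse e).delta =
      ∑ f ∈ g.edges.toFinset, g.edgeEdge e f + ∑ i ∈ arcIdx g.ve, g.edgeArc e i := by
  have hnd := nodup_of_not_hasParallel hg.2.1
  have hs : ¬HasParallel (g.edges.erase e) := by
    rintro ⟨a, ha, b, hb, h⟩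
    rw [Multiset.erase_comm] at hb
    exact hg.2.1 ⟨a, Multiset.mem_of_mem_erase ha, b, Multiset.mem_of_mem_erase hb, h⟩
  have hset : (g.edges.erase e).toFinset = g.edges.toFinset.erase e := by
    ext f
    rw [Multiset.mem_toFinset, hnd.mem_erase_iff, Finset.mem_erase, Multiset.mem_toFinset]
  rw [← Finset.sum_erase _ (g.edgeEdge_self e), ← hset, collapse,
    delta_map hs _ _ _ fun h => hg.collapse he hr h, smul_add, Finset.smul_sum, Finset.smul_sum]
  congr 1
  · refine Finset.sum_congr rfl fun f hf => ?_
    rw [edgeEdge, smul_ite, smul_smul, smul_zero]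
    simp only [hr, true_and]
  · refine Finset.sum_congr rfl fun i hi => ?_
    rw [edgeArc, if_pos hr, smul_smul]

theorem smul_delta_contractArc {g : OddGraph} (hg : g.IsSimple) {i : ℕ} (hi : i ∈ arcIdx g.ve) :
    csign i (rotLabel g.ve i) • (g.contractArc i (rotLabel g.ve i)).delta =
      ∑ e ∈ g.edges.toFinset, g.arcEdge i e + ∑ k ∈ arcIdx g.ve, g.arcArc i k := by
  have hi' := (mem_arcIdx.1 hi).2
  rw [contractArc_eq, delta_map hg.2.1 (OEdge.contract i (rotLabel g.ve i)) _ _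
    fun h => hg.contractArc (rotLabel_ne hi) hi' (rotLabel_lt_iff.2 hi') h, smul_add,
    sum_arcIdx_sub_one hi fun j l => csign j l • cls ⟨g.ve - 1 - 1, g.vi,
      (g.edges.map (OEdge.contract i (rotLabel g.ve i))).map (OEdge.contract j l)⟩,
    Finset.smul_sum, Finset.smul_sum]
  congr 1
  · refine Finset.sum_congr rfl fun e he => ?_
    rw [arcEdge, smul_ite, smul_smul, smul_zero]
  · refine Finset.sum_congr rfl fun k hk => ?_
    rw [arcArc, smul_ite, smul_smul, smul_zero]

theorem oddDelta_delta (g : OddGraph) : oddDelta g.delta = 0 := by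
  by_cases hg : g.IsSimple
  swap
  · rw [delta_eq_zero hg, map_zero]
  have hedge : ∀ e ∈ g.edges.toFinset,
      oddDelta (if e.IsRegularAt g.ve then csign e.src e.tgt • (g.collapse e).cls else 0) =
        ∑ f ∈ g.edges.toFinset, g.edgeEdge e f + ∑ i ∈ arcIdx g.ve, g.edgeArc e i := by
    intro e he
    split_ifs with hr
    · rw [map_smul, oddDelta_cls]
      exact smul_delta_collapse hg (Multiset.mem_toFinset.1 he) hr
    · simp [edgeEdge, edgeArc, hr]
  have harc : ∀ i ∈ arcIdx g.ve,
      oddDelta (csign i (rotLabel g.ve i) • (g.contractArc i (rotLabel g.ve i)).cls) =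
        ∑ e ∈ g.edges.toFinset, g.arcEdge i e + ∑ k ∈ arcIdx g.ve, g.arcArc i k := by
    intro i hi
    rw [map_smul, oddDelta_cls]
    exact smul_delta_contractArc hg hi
  rw [delta_eq_sum hg, map_add, map_sum, map_sum, Finset.sum_congr rfl hedge,
    Finset.sum_congr rfl harc, Finset.sum_add_distrib, Finset.sum_add_distrib,
    sum_sum_eq_zero_of_antisymm _ _ fun e he f hf => edgeEdge_antisymm hg.2.1
      (Multiset.mem_toFinset.1 he) (Multiset.mem_toFinset.1 hf),
    sum_sum_eq_zero_of_antisymm _ _ fun i hi k hk => arcArc_antisymm hi hk, zero_add, add_zero,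
    Finset.sum_comm, ← Finset.sum_add_distrib]
  refine Finset.sum_eq_zero fun i hi => ?_
  rw [← Finset.sum_add_distrib]
  exact sum_edgeArc_add_arcEdge hg.2.1 hi

theorem cls_mem_oddPiece {g : OddGraph} {k m : ℤ} (hk : g.ordZ = k) (hm : g.degZ = m) :
    g.cls ∈ oddPiece k m := by
  by_cases hg : g.IsValid
  · exact Submodule.subset_span ⟨g, hg, hk, hm, rfl⟩
  · rw [cls_eq_zero_of_not_isSimple fun h => hg h.1]
    exact Submodule.zero_mem _

theorem delta_mem_oddPiece (g : OddGraph) : g.delta ∈ oddPiece g.ordZ (g.degZ + 1) := by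
  by_cases hg : g.IsSimple
  swap
  · rw [delta_eq_zero hg]
    exact Submodule.zero_mem _
  rw [delta_eq_sum hg]
  refine Submodule.add_mem _ (Submodule.sum_mem _ fun e he => ?_)
    (Submodule.sum_mem _ fun i hi => Submodule.smul_mem _ _ ?_)
  · split_ifs with hr
    swap
    · exact Submodule.zero_mem _
    rw [Multiset.mem_toFinset] at he
    have hlt := hg.1.1 e he
    have hvi : 1 ≤ g.vi := by
      unfold OEdge.IsRegularAt at hr
      unfold nv at hlt
      omega
    have hcard := Multiset.card_erase_add_one he
    refine Submodule.smul_mem _ _ (cls_mem_oddPiece ?_ ?_)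
    · simp only [ordZ, numEdges, collapse, Multiset.card_map]
      omega
    · simp only [degZ, numEdges, collapse, Multiset.card_map]
      omega
  · have hve := (mem_arcIdx.1 hi).1
    refine cls_mem_oddPiece ?_ ?_
    · simp [ordZ, numEdges, contractArc_eq]
    · simp only [degZ, numEdges, contractArc_eq, Multiset.card_map]
      omega

end OddGraph

theorem oddDelta_oddDelta (x : Do) : oddDelta (oddDelta x) = 0 := by
  have h : oddDelta ∘ₗ oddDelta = 0 := by
    refine Submodule.linearMap_qext _ (Finsupp.lhom_ext' fun g => LinearMap.ext_ring ?_)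
    change oddDelta (oddDelta g.cls) = 0
    rw [oddDelta_cls, OddGraph.oddDelta_delta]
  exact LinearMap.congr_fun h x

theorem map_oddPiece_le (k m : ℤ) : (oddPiece k m).map oddDelta ≤ oddPiece k (m + 1) := by
  rw [oddPiece, Submodule.map_span_le]
  rintro _ ⟨g, -, rfl, rfl, rfl⟩
  change oddDelta g.cls ∈ _
  rw [oddDelta_cls]
  exact g.delta_mem_oddPiece

/-- The contraction operator `δ_o` is well defined on the quotient space
`D_o` (i.e. it descends through the sign relations on decorations, which is the existence
of the linear operator `δ` below together with the first property), it satisfies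
`δ_o ∘ δ_o = 0`, and it maps `D_o^{k,m}` into `D_o^{k,m+1}` for every order `k` and every
degree `m`. -/
theorem odd_graph_complex_coboundary :
    ∃ δ : Do →ₗ[ℝ] Do,
      (∀ g : OddGraph,
        δ (Submodule.Quotient.mk (p := oddRelations) (Finsupp.single g 1)) =
          Submodule.Quotient.mk (p := oddRelations) (deltaGen g)) ∧
      (∀ x : Do, δ (δ x) = 0) ∧
      (∀ k m : ℤ, (oddPiece k m).map δ ≤ oddPiece k (m + 1)) :=
  ⟨oddDelta, oddDelta_cls, oddDelta_oddDelta, map_oddPiece_le⟩
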